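/- arXiv:2510.09929 — 2 statements merged into one kernel-verified Lean document; each statement's English description precedes it below -/
import Mathlib

section
/- Let α be a locally Lipschitz class K function and h : ℝ^n → [0,∞) be continuous. Then h is a viscosity CBF with respect to α if and only if h provides the Barrier Guarantee with respect to α. -/
open Set Filter MeasureTheory Topology

noncomputable section

/-- `α : [0,∞) → [0,∞)` is a class `K` function: continuous, strictly increasing, `α 0 = 0`. -/
def IsClassK (α : ℝ → ℝ) : Prop :=
  ContinuousOn α (Set.Ici 0) ∧ StrictMonoOn α (Set.Ici 0) ∧ α 0 = 0

/-- `α` is a locally Lipschitz class `K` function on `[0,∞)`. -/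
def IsLocallyLipschitzClassK (α : ℝ → ℝ) : Prop :=
  IsClassK α ∧
    ∀ x ∈ Set.Ici (0 : ℝ), ∃ K : NNReal, ∃ s ∈ nhdsWithin x (Set.Ici (0 : ℝ)),
      LipschitzOnWith K α s

/-- `β` is the function `β_α`: for each `r ≥ 0`, `t ↦ β r t` solves `y' = -α y`, `y 0 = r`,
staying in `[0, r]` for all `t ≥ 0`. -/
def IsBetaFor (α : ℝ → ℝ) (β : ℝ → ℝ → ℝ) : Prop :=
  ∀ r : ℝ, 0 ≤ r →
    β r 0 = r ∧ ∀ t : ℝ, 0 ≤ t →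
      0 ≤ β r t ∧ β r t ≤ r ∧ HasDerivWithinAt (β r) (-α (β r t)) (Set.Ici 0) t

/-- `u` is an admissible control signal: measurable, valued in `U` on `[0,∞)`. -/
def IsControl {m : ℕ} (U : Set (Fin m → ℝ)) (u : ℝ → Fin m → ℝ) : Prop :=
  Measurable u ∧ ∀ t : ℝ, 0 ≤ t → u t ∈ U

/-- `ξ` is an admissible trajectory from `x` under the control signal `u`. -/
def IsTrajectory {n m : ℕ} (f : (Fin n → ℝ) → (Fin m → ℝ) → Fin n → ℝ)
    (x : Fin n → ℝ) (u : ℝ → Fin m → ℝ) (ξ : ℝ → Fin n → ℝ) : Prop :=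
  Continuous ξ ∧ ∀ t : ℝ, 0 ≤ t → ξ t = x + ∫ s in (0 : ℝ)..t, f (ξ s) (u s)

/-- `B` provides the Barrier Guarantee with respect to the anti-discount rate encoded by
`β = β_α`. -/
def BarrierGuarantee {n m : ℕ} (f : (Fin n → ℝ) → (Fin m → ℝ) → Fin n → ℝ)
    (U : Set (Fin m → ℝ)) (β : ℝ → ℝ → ℝ) (B : (Fin n → ℝ) → ℝ) : Prop :=
  ∀ θ ∈ Set.Ico (0 : ℝ) 1, ∀ x : Fin n → ℝ, 0 < B x →
    ∃ u ξ, IsControl U u ∧ IsTrajectory f x u ξ ∧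
      ∀ t : ℝ, 0 ≤ t → β (θ * B x) t ≤ B (ξ t)

/-- `h` is a viscosity CBF with respect to `α`: for every `x` with `h x > 0` and every `C¹`
test function `φ` such that `h - φ` has a local maximum at `x`, one has
`max_{u ∈ U} ∇φ(x) · f(x,u) ≥ -α (h x)`. -/
def IsViscosityCBF {n m : ℕ} (f : (Fin n → ℝ) → (Fin m → ℝ) → Fin n → ℝ)
    (U : Set (Fin m → ℝ)) (α : ℝ → ℝ) (h : (Fin n → ℝ) → ℝ) : Prop :=
  Continuous h ∧
    ∀ x : Fin n → ℝ, 0 < h x →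
      ∀ φ : (Fin n → ℝ) → ℝ, ContDiff ℝ 1 φ →
        IsLocalMax (fun y => h y - φ y) x →
        -α (h x) ≤ sSup ((fun u => fderiv ℝ φ x (f x u)) '' U)

/-!
From paths to viscosity: along a path issued from a point `x` at which `h - φ` has a local maximum,
`φ` grows at least as fast as `h`, hence initially at rate at least `-α (h x)` up to letting
`θ → 1`; on the other hand, the growth rate of `φ` is at most the maximum of `∇φ(x) · f(x, u)` over
`u`, up to terms of higher order in time.

From viscosity to paths: replace `h` by its sup-convolution
`S y = sup_z (h z - l ‖z - y‖²)` over a large ball. If `z` attains the supremum at `y`, then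
`w ↦ l ‖w - y‖²` touches `h` from above at `z`, so the viscosity inequality provides a control `v`
with `2 l ⟪z - y, f(z, v)⟫ ≥ -α (h z)`. Following `v` from `y` for a short time `s`, with `z` kept
as a competitor, `S` decreases by at most `s (α (S y) + ε)`, and the length of the admissible time
steps is uniform in `y`. A strict subsolution of `p' = -α p` lying slightly above `β_α` therefore
stays below `S` along a path with piecewise constant controls. As `S` is uniformly close to `h`,
this gives the guarantee up to a time depending only on the Lipschitz constant of `f`, and such
paths can be concatenated.
-/
/-! ### Scalar comparison -/

lemma exists_forall_le_add_mul_of_deriv_le {p p' g : ℝ → ℝ} {T ε : ℝ}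
    (hp : ∀ t ∈ Icc 0 T, HasDerivWithinAt p (p' t) (Ici 0) t)
    (hg : ContinuousOn g (Icc 0 T)) (hle : ∀ t ∈ Icc 0 T, p' t ≤ g t) (hε : 0 < ε) :
    ∃ δ > 0, ∀ t s, 0 ≤ t → s ∈ Icc 0 δ → t + s ≤ T → p (t + s) ≤ p t + s * (g t + ε) := by
  obtain ⟨δ, hδ, hgδ⟩ := Metric.uniformContinuousOn_iff_le.1
    (isCompact_Icc.uniformContinuousOn_of_continuous hg) ε hε
  refine ⟨δ, hδ, fun t s ht hs hts => ?_⟩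
  have hsub : Icc t (t + s) ⊆ Icc 0 T := Icc_subset_Icc ht hts
  have hderiv : ∀ σ ∈ Ioo t (t + s), HasDerivAt p (p' σ) σ := fun σ hσ =>
    (hp σ (hsub (Ioo_subset_Icc_self hσ))).hasDerivAt (Ici_mem_nhds (ht.trans_lt hσ.1))
  have hmvt := (convex_Icc t (t + s)).image_sub_le_mul_sub_of_deriv_le (f := p) (C := g t + ε)
    (fun σ hσ => (hp σ (hsub hσ)).continuousWithinAt.mono fun τ hτ => ht.trans hτ.1)
    (fun σ hσ => (hderiv σ (by simpa using hσ)).differentiableAt.differentiableWithinAt)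
    (fun σ hσ => by
      rw [interior_Icc] at hσ
      have hσT := hsub (Ioo_subset_Icc_self hσ)
      have hdist : |g σ - g t| ≤ ε := hgδ σ hσT t ⟨ht, by linarith [hs.1]⟩ (by
        rw [Real.dist_eq, abs_of_pos (sub_pos.2 hσ.1)]
        linarith [hσ.2, hs.2])
      rw [(hderiv σ hσ).deriv]
      linarith [hle σ hσT, le_of_abs_le hdist])
    t (by simpa using hs.1) (t + s) (by simpa using hs.1) (by simpa using hs.1)
  rw [add_sub_cancel_left] at hmvt
  linarith

lemma exists_antitone_hasDerivAt_neg_mul {k ρ : ℝ} (hk : 0 ≤ k) (hρ : 0 < ρ) :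
    ∃ e : ℝ → ℝ, e 0 = ρ ∧ (∀ t, 0 < e t) ∧ Antitone e ∧ ∀ t, HasDerivAt e (-k * e t) t := by
  refine ⟨fun t => ρ * Real.exp (-k * t), by simp, fun t => by positivity, fun s t hst => ?_,
    fun t => ?_⟩
  · exact mul_le_mul_of_nonneg_left
      (Real.exp_le_exp.2 (mul_le_mul_of_nonpos_left hst (neg_nonpos.2 hk))) hρ.le
  · exact (((hasDerivAt_id t).const_mul (-k)).exp.const_mul ρ).congr_deriv (by simp; ring)

/-- Adding `ρ e^{-(L+1)t}` to a solution of `b' = -α b`, where `L` is a Lipschitz constant of `α`,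
makes it a strict subsolution. -/
lemma neg_sub_mul_le_neg_sub_of_lipschitzOnWith {α : ℝ → ℝ} {I : Set ℝ} {L : NNReal}
    (hα : LipschitzOnWith L α I) {y e : ℝ} (he : 0 ≤ e) (hy : y ∈ I) (hye : y + e ∈ I) :
    -α y - (L + 1) * e ≤ -α (y + e) - e := by
  have hdist := hα.dist_le_mul _ hye _ hy
  rw [Real.dist_eq, Real.dist_eq, add_sub_cancel_left, abs_of_nonneg he] at hdist
  linarith [le_of_abs_le hdist]

lemma sub_mul_le_sub_mul_of_lipschitzOnWith {α : ℝ → ℝ} {I : Set ℝ} {L : NNReal}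
    (hα : LipschitzOnWith L α I) {p v s c : ℝ} (hp : p ∈ I) (hv : v ∈ I) (hpv : p ≤ v)
    (hs : 0 ≤ s) (hsL : s * L ≤ 1) : p - s * (α p + c) ≤ v - s * (α v + c) := by
  have hdist := hα.dist_le_mul _ hv _ hp
  rw [Real.dist_eq, Real.dist_eq, abs_of_nonneg (sub_nonneg.2 hpv)] at hdist
  have hαs : s * (α v - α p) ≤ s * (L * (v - p)) :=
    mul_le_mul_of_nonneg_left (le_of_abs_le hdist) hs
  have hsLv : s * L * (v - p) ≤ 1 * (v - p) :=
    mul_le_mul_of_nonneg_right hsL (sub_nonneg.2 hpv)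
  linarith

lemma exists_strict_subsolution {α b : ℝ → ℝ} {r ρ T : ℝ}
    (hα : LocallyLipschitzOn (Ici 0) α)
    (hb : ∀ t, 0 ≤ t → b t ∈ Icc 0 r ∧ HasDerivWithinAt b (-α (b t)) (Ici 0) t)
    (hρ : 0 < ρ) (A : ℝ) :
    ∃ (p : ℝ → ℝ) (c δ : ℝ), 0 < c ∧ 0 < δ ∧ p 0 = b 0 + ρ ∧ (∀ t ∈ Icc 0 T, b t + c ≤ p t) ∧
      ∀ t s, 0 ≤ t → s ∈ Icc 0 δ → t + s ≤ T → ∀ v ∈ Icc (p t) A,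
        p (t + s) ≤ v - s * (α v + c) := by
  set I := Icc 0 (max (r + ρ) A)
  obtain ⟨L, hL⟩ := (hα.mono (Icc_subset_Ici_self : I ⊆ _)).exists_lipschitzOnWith_of_compact
    isCompact_Icc
  obtain ⟨e, he_zero, he_pos, he_anti, he_deriv⟩ :=
    exists_antitone_hasDerivAt_neg_mul (k := L + 1) (by positivity) hρ
  have hbI : ∀ t, 0 ≤ t → b t ∈ I := fun t ht =>
    ⟨(hb t ht).1.1, (hb t ht).1.2.trans (le_max_of_le_left (by linarith))⟩
  have hpI : ∀ t, 0 ≤ t → b t + e t ∈ I := fun t ht =>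
    ⟨add_nonneg (hb t ht).1.1 (he_pos t).le,
      le_max_of_le_left (add_le_add (hb t ht).1.2 (he_zero ▸ he_anti ht))⟩
  have hp_deriv : ∀ t, 0 ≤ t →
      HasDerivWithinAt (fun t => b t + e t) (-α (b t) + -(L + 1) * e t) (Ici 0) t :=
    fun t ht => (hb t ht).2.add (he_deriv t).hasDerivWithinAt
  have hαp : ContinuousOn (fun t => α (b t + e t)) (Icc 0 T) :=
    hL.continuousOn.comp (fun t ht => (hp_deriv t ht.1).continuousWithinAt.mono
      Icc_subset_Ici_self) fun t ht => hpI t ht.1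
  obtain ⟨δ, hδ, hstep⟩ := exists_forall_le_add_mul_of_deriv_le (ε := e T / 2)
    (g := fun t => -α (b t + e t) - e T)
    (fun t ht => hp_deriv t ht.1) (hαp.fun_neg.sub continuousOn_const)
    (fun t ht => by
      have := neg_sub_mul_le_neg_sub_of_lipschitzOnWith hL (he_pos t).le (hbI t ht.1) (hpI t ht.1)
      linarith [he_anti ht.2]) (half_pos (he_pos T))
  refine ⟨fun t => b t + e t, e T / 2, min δ (1 / (L + 1)), half_pos (he_pos T),
    lt_min hδ (by positivity), by simp only [he_zero], fun t ht => by
      linarith [he_anti ht.2, he_pos T], fun t s ht hs hts v hv => ?_⟩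
  have hsL : s * L ≤ 1 := by
    have hs' := (le_div_iff₀ (by positivity)).1 (hs.2.trans (min_le_right _ _))
    linarith [hs.1]
  have hmono := sub_mul_le_sub_mul_of_lipschitzOnWith hL (c := e T / 2) (hpI t ht)
    ⟨(hpI t ht).1.trans hv.1, le_max_of_le_right hv.2⟩ hv.1 hs.1 hsL
  have hstep' := hstep t s ht ⟨hs.1, hs.2.trans (min_le_left _ _)⟩ hts
  linarith

namespace IsBetaFor

variable {α : ℝ → ℝ} {β : ℝ → ℝ → ℝ}

lemma exists_dist_le (hβ : IsBetaFor α β) (hα : LocallyLipschitzOn (Ici 0) α) (A : ℝ) :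
    ∃ K : NNReal, ∀ r ∈ Icc 0 A, ∀ s ∈ Icc 0 A, ∀ t, 0 ≤ t →
      dist (β r t) (β s t) ≤ dist r s * Real.exp (K * t) := by
  obtain ⟨K, hK⟩ := (hα.mono
    (Icc_subset_Ici_self : Icc 0 A ⊆ _)).exists_lipschitzOnWith_of_compact isCompact_Icc
  have hmem : ∀ r ∈ Icc 0 A, ∀ t, 0 ≤ t → β r t ∈ Icc 0 A := fun r hr t ht =>
    ⟨((hβ r hr.1).2 t ht).1, ((hβ r hr.1).2 t ht).2.1.trans hr.2⟩
  have hderiv : ∀ r ∈ Icc 0 A, ∀ t, 0 ≤ t →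
      HasDerivWithinAt (β r) (-α (β r t)) (Ici 0) t := fun r hr t ht => ((hβ r hr.1).2 t ht).2.2
  refine ⟨K, fun r hr s hs t ht => ?_⟩
  have := dist_le_of_trajectories_ODE_of_mem (v := fun _ y => -α y) (K := K)
    (s := fun _ => Icc 0 A) (a := 0) (b := t) (f := β r) (g := β s) (δ := dist r s)
    (fun _ _ => hK.neg)
    (fun τ hτ => (hderiv r hr τ hτ.1).continuousWithinAt.mono Icc_subset_Ici_self)
    (fun τ hτ => (hderiv r hr τ hτ.1).mono (Ici_subset_Ici.2 hτ.1))
    (fun τ hτ => hmem r hr τ hτ.1)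
    (fun τ hτ => (hderiv s hs τ hτ.1).continuousWithinAt.mono Icc_subset_Ici_self)
    (fun τ hτ => (hderiv s hs τ hτ.1).mono (Ici_subset_Ici.2 hτ.1))
    (fun τ hτ => hmem s hs τ hτ.1)
    (by rw [(hβ r hr.1).1, (hβ s hs.1).1]) t ⟨ht, le_rfl⟩
  simpa using this

lemma continuousOn (hβ : IsBetaFor α β) (hα : LocallyLipschitzOn (Ici 0) α) {t : ℝ} (ht : 0 ≤ t)
    (A : ℝ) : ContinuousOn (fun r => β r t) (Icc 0 A) := by
  obtain ⟨K, hK⟩ := hβ.exists_dist_le hα A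
  refine (LipschitzOnWith.of_dist_le_mul (K := (Real.exp (K * t)).toNNReal)
    fun r hr s hs => ?_).continuousOn
  rw [Real.coe_toNNReal _ (Real.exp_nonneg _), mul_comm]
  exact hK r hr s hs t ht

lemma le_of_forall_mul_le (hβ : IsBetaFor α β) (hα : LocallyLipschitzOn (Ici 0) α) {r t C : ℝ}
    (hr : 0 ≤ r) (ht : 0 ≤ t) (h : ∀ θ ∈ Ico (0 : ℝ) 1, β (θ * r) t ≤ C) : β r t ≤ C := by
  have hcont : ContinuousOn (fun θ => β (θ * r) t) (Icc 0 1) :=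
    (hβ.continuousOn hα ht r).comp (by fun_prop) fun θ hθ =>
      ⟨mul_nonneg hθ.1 hr, mul_le_of_le_one_left hr hθ.2⟩
  have hlim := ((hcont 1 (right_mem_Icc.2 zero_le_one)).mono Ico_subset_Icc_self).tendsto
  have : (𝓝[Ico (0 : ℝ) 1] 1).NeBot := by rw [nhdsWithin_Ico_eq_nhdsLT one_pos]; infer_instance
  rw [one_mul] at hlim
  exact le_of_tendsto hlim (eventually_mem_nhdsWithin.mono h)

lemma neg_le_of_eventually_le (hβ : IsBetaFor α β) {r C : ℝ} (hr : 0 ≤ r)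
    (h : ∀ᶠ t in 𝓝[>] 0, β r t ≤ r + t * C) : -α r ≤ C := by
  obtain ⟨hβ0, hβr⟩ := hβ r hr
  have hslope := (hasDerivWithinAt_iff_tendsto_slope' self_notMem_Ioi).1
    ((hβr 0 le_rfl).2.2.mono Ioi_subset_Ici_self)
  rw [hβ0] at hslope
  refine le_of_tendsto hslope ?_
  filter_upwards [h, self_mem_nhdsWithin] with t ht htpos
  rw [slope_def_field, hβ0, sub_zero, div_le_iff₀ htpos]
  linarith

end IsBetaFor

/-! ### Controlled paths -/

lemma exists_eqOn_Iic_of_eqOn_succ {X : Type*} {δ : ℝ} (hδ : 0 < δ) {g : ℕ → ℝ → X}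
    (hg : ∀ k : ℕ, EqOn (g (k + 1)) (g k) (Iic (k * δ))) :
    ∃ G : ℝ → X, ∀ k : ℕ, EqOn G (g k) (Iic (k * δ)) := by
  refine ⟨fun t => g ⌈t / δ⌉₊ t, fun k t ht => ?_⟩
  have hceil : ⌈t / δ⌉₊ ≤ k := Nat.ceil_le.2 ((div_le_iff₀ hδ).2 ht)
  induction k, hceil using Nat.le_induction with
  | base => rfl
  | succ j hj ih =>
    have htj : t ≤ j * δ := (div_le_iff₀ hδ).1 (Nat.ceil_le.1 hj)
    exact (ih htj).trans (hg j htj).symm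

lemma exists_nat_lt_mul {δ : ℝ} (hδ : 0 < δ) (t : ℝ) : ∃ k : ℕ, t < k * δ :=
  (exists_nat_gt (t / δ)).imp fun _ => (div_lt_iff₀ hδ).1

lemma measurable_of_eqOn_Iic {X : Type*} [MeasurableSpace X] {δ : ℝ} (hδ : 0 < δ)
    {g : ℕ → ℝ → X} {G : ℝ → X} (hG : ∀ k : ℕ, EqOn G (g k) (Iic (k * δ)))
    (hg : ∀ k, Measurable (g k)) : Measurable G := by
  intro A hA
  have hpre : G ⁻¹' A = ⋃ k : ℕ, Iic (k * δ) ∩ g k ⁻¹' A := by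
    ext t
    simp only [mem_preimage, mem_iUnion, mem_inter_iff]
    refine ⟨fun ht => ?_, fun ⟨k, htk, ht⟩ => by rwa [hG k htk]⟩
    obtain ⟨k, hk⟩ := exists_nat_lt_mul hδ t
    exact ⟨k, hk.le, by rwa [← hG k hk.le]⟩
  rw [hpre]
  exact .iUnion fun k => measurableSet_Iic.inter (hg k hA)

lemma continuous_of_eqOn_Iic {X : Type*} [TopologicalSpace X] {δ : ℝ} (hδ : 0 < δ)
    {g : ℕ → ℝ → X} {G : ℝ → X} (hG : ∀ k : ℕ, EqOn G (g k) (Iic (k * δ)))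
    (hg : ∀ k, Continuous (g k)) : Continuous G := by
  refine continuous_iff_continuousAt.2 fun t => ?_
  obtain ⟨k, hk⟩ := exists_nat_lt_mul hδ t
  exact (hg k).continuousAt.congr
    ((hG k).symm.eventuallyEq_of_mem (Iic_mem_nhds hk))

lemma intervalIntegrable_uncurry_of_continuous {E V : Type*} [NormedAddCommGroup E]
    [TopologicalSpace V] [CompactSpace V] [TopologicalSpace.PseudoMetrizableSpace V]
    [MeasurableSpace V] [OpensMeasurableSpace V] {F : E → V → E} {u : ℝ → V} {ξ : ℝ → E}
    (hF : Continuous (Function.uncurry F)) (hu : Measurable u) (hξ : Continuous ξ) (a b : ℝ) :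
    IntervalIntegrable (fun s => F (ξ s) (u s)) volume a b := by
  let := TopologicalSpace.pseudoMetrizableSpacePseudoMetric V
  have : SecondCountableTopology V := inferInstance
  obtain ⟨C, hC⟩ := (((isCompact_uIcc.image hξ).prod isCompact_univ).image
    hF).isBounded.exists_norm_le (s := Function.uncurry F '' ((ξ '' uIcc a b) ×ˢ univ))
  have hmeas : StronglyMeasurable fun s => F (ξ s) (u s) :=
    hF.comp_stronglyMeasurable (hξ.stronglyMeasurable.prodMk hu.stronglyMeasurable)
  refine (intervalIntegrable_const (c := C)).mono_fun hmeas.aestronglyMeasurable ?_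
  refine (ae_restrict_iff' measurableSet_uIoc).2 (Eventually.of_forall fun s hs => ?_)
  exact (hC _ ⟨(ξ s, u s), ⟨⟨s, uIoc_subset_uIcc hs, rfl⟩, mem_univ _⟩, rfl⟩).trans
    (le_abs_self C)

/-- `ξ` is a path which on `[0, T]` solves `ξ' = F ξ u`, `ξ 0 = x` in the integral sense, for the
control signal `u`. The signals are defined on all of `ℝ`, and are unconstrained outside
`[0, T]` apart from being measurable and continuous respectively. -/
structure IsControlledPath {E V : Type*} [NormedAddCommGroup E] [NormedSpace ℝ E]
    [MeasurableSpace V] (F : E → V → E) (T : ℝ) (x : E) (u : ℝ → V) (ξ : ℝ → E) : Prop where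
  measurable : Measurable u
  continuous : Continuous ξ
  eq_add_integral : ∀ t ∈ Icc 0 T, ξ t = x + ∫ s in (0 : ℝ)..t, F (ξ s) (u s)

namespace IsControlledPath

variable {E V : Type*} [NormedAddCommGroup E] [NormedSpace ℝ E] [MeasurableSpace V]
  {F : E → V → E} {T : ℝ} {x : E} {u : ℝ → V} {ξ : ℝ → E}

lemma apply_zero (h : IsControlledPath F T x u ξ) (hT : 0 ≤ T) : ξ 0 = x := by
  simpa using h.eq_add_integral 0 ⟨le_rfl, hT⟩

lemma mono {S : ℝ} (h : IsControlledPath F T x u ξ) (hST : S ≤ T) : IsControlledPath F S x u ξ :=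
  ⟨h.measurable, h.continuous, fun t ht => h.eq_add_integral t ⟨ht.1, ht.2.trans hST⟩⟩

lemma congr {v : ℝ → V} {ζ : ℝ → E} (h : IsControlledPath F T x u ξ) (hv : Measurable v)
    (hζ : Continuous ζ) (huv : EqOn v u (Icc 0 T)) (hξζ : EqOn ζ ξ (Icc 0 T)) :
    IsControlledPath F T x v ζ := by
  refine ⟨hv, hζ, fun t ht => ?_⟩
  rw [hξζ ht, h.eq_add_integral t ht]
  congr 1
  refine intervalIntegral.integral_congr fun s hs => ?_
  rw [uIcc_of_le ht.1] at hs
  have hsT : s ∈ Icc 0 T := ⟨hs.1, hs.2.trans ht.2⟩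
  simp only [huv hsT, hξζ hsT]

lemma sub_eq_integral (h : IsControlledPath F T x u ξ) {t : ℝ} (ht : t ∈ Icc 0 T) :
    ξ t - x = ∫ s in (0 : ℝ)..t, F (ξ s) (u s) := by
  rw [h.eq_add_integral t ht, add_sub_cancel_left]

lemma norm_sub_le (h : IsControlledPath F T x u ξ) {K : NNReal}
    (hK : ∀ v, LipschitzWith K fun y => F y v) (hKT : K * T ≤ 1 / 2) {C : ℝ}
    (hC : ∀ v, ‖F x v‖ ≤ C) : ∀ t ∈ Icc 0 T, ‖ξ t - x‖ ≤ 2 * C * t := by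
  intro t ht
  obtain ⟨s, hs, hmax⟩ := isCompact_Icc.exists_isMaxOn (nonempty_Icc.2 ht.1)
    (h.continuous.sub continuous_const).norm.continuousOn
  have hmax' : ∀ r ∈ Icc 0 t, ‖ξ r - x‖ ≤ ‖ξ s - x‖ := fun r hr => hmax hr
  have hint : ‖ξ s - x‖ ≤ (C + K * ‖ξ s - x‖) * |s - 0| := by
    conv_lhs => rw [h.sub_eq_integral ⟨hs.1, hs.2.trans ht.2⟩]
    refine intervalIntegral.norm_integral_le_of_norm_le_const fun r hr => ?_
    rw [uIoc_of_le hs.1] at hr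
    calc ‖F (ξ r) (u r)‖ ≤ ‖F x (u r)‖ + ‖F (ξ r) (u r) - F x (u r)‖ :=
          norm_le_insert' _ _
      _ ≤ C + K * ‖ξ r - x‖ := add_le_add (hC _) ((hK (u r)).norm_sub_le _ _)
      _ ≤ C + K * ‖ξ s - x‖ := by gcongr; exact hmax' r ⟨hr.1.le, hr.2.trans hs.2⟩
  rw [sub_zero, abs_of_nonneg hs.1, add_mul] at hint
  have hC0 : 0 ≤ C := (norm_nonneg _).trans (hC (u 0))
  have hCs : C * s ≤ C * t := mul_le_mul_of_nonneg_left hs.2 hC0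
  have hKs : K * s ≤ 1 / 2 :=
    (mul_le_mul_of_nonneg_left (hs.2.trans ht.2) K.coe_nonneg).trans hKT
  have habsorb : K * ‖ξ s - x‖ * s ≤ 1 / 2 * ‖ξ s - x‖ := by
    rw [mul_right_comm]
    exact mul_le_mul_of_nonneg_right hKs (norm_nonneg _)
  linarith [hmax' t ⟨ht.1, le_rfl⟩]

lemma exists_forall_of_eqOn_succ {δ : ℝ} (hδ : 0 < δ) {u : ℕ → ℝ → V} {ξ : ℕ → ℝ → E}
    (h : ∀ k : ℕ, IsControlledPath F (k * δ) x (u k) (ξ k))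
    (hu : ∀ k : ℕ, EqOn (u (k + 1)) (u k) (Iic (k * δ)))
    (hξ : ∀ k : ℕ, EqOn (ξ (k + 1)) (ξ k) (Iic (k * δ))) :
    ∃ w χ, (∀ T, IsControlledPath F T x w χ) ∧ ∀ k : ℕ, EqOn χ (ξ k) (Iic (k * δ)) := by
  obtain ⟨w, hw⟩ := exists_eqOn_Iic_of_eqOn_succ hδ hu
  obtain ⟨χ, hχ⟩ := exists_eqOn_Iic_of_eqOn_succ hδ hξ
  refine ⟨w, χ, fun T => ?_, hχ⟩
  obtain ⟨k, hk⟩ := exists_nat_lt_mul hδ T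
  exact ((h k).congr (measurable_of_eqOn_Iic hδ hw fun k => (h k).measurable)
    (continuous_of_eqOn_Iic hδ hχ fun k => (h k).continuous)
    ((hw k).mono Icc_subset_Iic_self) ((hχ k).mono Icc_subset_Iic_self)).mono hk.le

section Integrability

variable [TopologicalSpace V] [CompactSpace V] [TopologicalSpace.PseudoMetrizableSpace V]
  [OpensMeasurableSpace V]

lemma norm_sub_sub_integral_le (h : IsControlledPath F T x u ξ)
    (hF : Continuous (Function.uncurry F)) {K : NNReal}
    (hK : ∀ v, LipschitzWith K fun y => F y v) (hKT : K * T ≤ 1 / 2) {C : ℝ}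
    (hC : ∀ v, ‖F x v‖ ≤ C) {t : ℝ} (ht : t ∈ Icc 0 T) :
    ‖ξ t - x - ∫ s in (0 : ℝ)..t, F x (u s)‖ ≤ 2 * K * C * t ^ 2 := by
  have hC0 : 0 ≤ C := (norm_nonneg _).trans (hC (u 0))
  rw [h.sub_eq_integral ht, ← intervalIntegral.integral_sub
    (intervalIntegrable_uncurry_of_continuous hF h.measurable h.continuous 0 t)
    (intervalIntegrable_uncurry_of_continuous hF h.measurable continuous_const 0 t)]
  refine (intervalIntegral.norm_integral_le_of_norm_le_const (C := K * (2 * C * t))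
    fun s hs => ?_).trans_eq (by rw [sub_zero, abs_of_nonneg ht.1]; ring)
  rw [uIoc_of_le ht.1] at hs
  calc ‖F (ξ s) (u s) - F x (u s)‖ ≤ K * ‖ξ s - x‖ := (hK (u s)).norm_sub_le _ _
    _ ≤ K * (2 * C * s) := by
      gcongr
      exact h.norm_sub_le hK hKT hC s ⟨hs.1.le, hs.2.trans ht.2⟩
    _ ≤ K * (2 * C * t) := by gcongr; exact hs.2

lemma concat (hF : Continuous (Function.uncurry F)) {S : ℝ} (hT : 0 ≤ T) (hS : 0 ≤ S) {v : ℝ → V}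
    {ζ : ℝ → E} (h : IsControlledPath F T x u ξ) (h' : IsControlledPath F S (ξ T) v ζ) :
    ∃ w χ, IsControlledPath F (T + S) x w χ ∧ EqOn w u (Iic T) ∧ EqOn χ ξ (Iic T) ∧
      ∀ s, 0 ≤ s → χ (T + s) = ζ s := by
  set w : ℝ → V := fun t => if t ≤ T then u t else v (t - T) with hw
  set χ : ℝ → E := fun t => if t ≤ T then ξ t else ζ (t - T) with hχ
  have hw_meas : Measurable w :=
    Measurable.ite measurableSet_Iic h.measurable (h'.measurable.comp (measurable_id.sub_const T))
  have hχ_cont : Continuous χ :=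
    h.continuous.if_le (h'.continuous.comp (continuous_id.sub continuous_const)) continuous_id
      continuous_const (by rintro _ rfl; simp [h'.apply_zero hS])
  have hwu : EqOn w u (Iic T) := fun t ht => if_pos ht
  have hχξ : EqOn χ ξ (Iic T) := fun t ht => if_pos ht
  have hχζ : ∀ s, 0 ≤ s → χ (T + s) = ζ s := by
    rintro s hs
    rcases hs.eq_or_lt with rfl | hs
    · simp [hχ, h'.apply_zero hS]
    · simp [hχ, not_le.2 (lt_add_of_pos_right T hs)]
  have hpath := h.congr hw_meas hχ_cont (hwu.mono Icc_subset_Iic_self)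
    (hχξ.mono Icc_subset_Iic_self)
  refine ⟨w, χ, ⟨hw_meas, hχ_cont, fun t ht => ?_⟩, hwu, hχξ, hχζ⟩
  rcases le_total t T with htT | htT
  · exact hpath.eq_add_integral t ⟨ht.1, htT⟩
  · have hshift : ∫ s in T..t, F (χ s) (w s) = ∫ s in (0 : ℝ)..(t - T), F (ζ s) (v s) := by
      rw [← sub_self T, ← intervalIntegral.integral_comp_sub_right (fun s => F (ζ s) (v s))]
      refine intervalIntegral.integral_congr_ae (Eventually.of_forall fun s hs => ?_)
      rw [uIoc_of_le htT] at hs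
      simp [hχ, hw, not_le.2 hs.1]
    have hint := intervalIntegrable_uncurry_of_continuous hF hw_meas hχ_cont
    rw [← intervalIntegral.integral_add_adjacent_intervals (hint 0 T) (hint T t), ← add_assoc,
      ← hpath.eq_add_integral T ⟨hT, le_rfl⟩, hχξ self_mem_Iic, hshift,
      ← h'.eq_add_integral (t - T) ⟨sub_nonneg.2 htT, by linarith [ht.2]⟩,
      ← hχζ (t - T) (sub_nonneg.2 htT), add_sub_cancel]

lemma concat_forall (hF : Continuous (Function.uncurry F)) {S : ℝ} (hT : 0 ≤ T) (hS : 0 ≤ S)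
    {v : ℝ → V} {ζ : ℝ → E} {P : ℝ → E → Prop} (h : IsControlledPath F T x u ξ)
    (hP : ∀ t ∈ Icc 0 T, P t (ξ t)) (h' : IsControlledPath F S (ξ T) v ζ)
    (hP' : ∀ s ∈ Icc 0 S, P (T + s) (ζ s)) :
    ∃ w χ, IsControlledPath F (T + S) x w χ ∧ EqOn w u (Iic T) ∧ EqOn χ ξ (Iic T) ∧
      ∀ t ∈ Icc 0 (T + S), P t (χ t) := by
  obtain ⟨w, χ, hχ, hwu, hχξ, hχζ⟩ := concat hF hT hS h h'
  refine ⟨w, χ, hχ, hwu, hχξ, fun t ht => ?_⟩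
  rcases le_total t T with htT | htT
  · simpa only [hχξ htT] using hP t ⟨ht.1, htT⟩
  · have hPt := hP' (t - T) ⟨sub_nonneg.2 htT, by linarith [ht.2]⟩
    rwa [← hχζ _ (sub_nonneg.2 htT), add_sub_cancel] at hPt

lemma exists_forall_of_step (hF : Continuous (Function.uncurry F)) {δ : ℝ} (hδ : 0 < δ)
    {P : ℝ → E → Prop}
    (step : ∀ t, 0 ≤ t → ∀ y, P t y →
      ∃ u ξ, IsControlledPath F δ y u ξ ∧ ∀ s ∈ Icc 0 δ, P (t + s) (ξ s)) (hx : P 0 x) :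
    ∃ u ξ, (∀ T, IsControlledPath F T x u ξ) ∧ ∀ t, 0 ≤ t → P t (ξ t) := by
  let Q : ℕ → (ℝ → V) × (ℝ → E) → Prop := fun k p =>
    IsControlledPath F (k * δ) x p.1 p.2 ∧ ∀ t ∈ Icc 0 (k * δ), P t (p.2 t)
  have hQ0 : ∃ p, Q 0 p := by
    obtain ⟨u, ξ, hξ, -⟩ := step 0 le_rfl x hx
    refine ⟨(u, ξ), hξ.mono (by simpa using hδ.le), fun t ht => ?_⟩
    obtain rfl : t = 0 := by simpa using ht
    simpa only [hξ.apply_zero hδ.le] using hx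
  have hnext : ∀ k p, Q k p → ∃ q, Q (k + 1) q ∧
      EqOn q.1 p.1 (Iic (k * δ)) ∧ EqOn q.2 p.2 (Iic (k * δ)) := by
    rintro k p ⟨hp, hPp⟩
    have hk : 0 ≤ k * δ := by positivity
    obtain ⟨v, ζ, hζ, hPζ⟩ := step (k * δ) hk _ (hPp _ ⟨hk, le_rfl⟩)
    obtain ⟨w, χ, hχ, hwu, hχξ, hPχ⟩ := concat_forall hF hk hδ.le hp hPp hζ hPζ
    exact ⟨(w, χ), by simpa only [Q, Nat.cast_succ, add_one_mul] using ⟨hχ, hPχ⟩, hwu, hχξ⟩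
  obtain ⟨p₀, hp₀⟩ := hQ0
  have : Nonempty ((ℝ → V) × (ℝ → E)) := ⟨p₀⟩
  choose! next hnextQ hnext₁ hnext₂ using hnext
  let p : ℕ → (ℝ → V) × (ℝ → E) := fun k => Nat.rec p₀ next k
  have hp : ∀ k, Q k (p k) := fun k => Nat.rec hp₀ (fun k hk => hnextQ k _ hk) k
  obtain ⟨w, χ, hχ, hχp⟩ := exists_forall_of_eqOn_succ hδ (fun k => (hp k).1)
    (fun k => hnext₁ k _ (hp k)) fun k => hnext₂ k _ (hp k)
  refine ⟨w, χ, hχ, fun t ht => ?_⟩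
  obtain ⟨k, hk⟩ := exists_nat_lt_mul hδ t
  simpa only [hχp k hk.le] using (hp k).2 t ⟨ht, hk.le⟩

end Integrability

lemma exists_const [CompleteSpace E] {K : NNReal} {v : V} (hK : LipschitzWith K fun y => F y v)
    (hT : 0 ≤ T) (hKT : K * T ≤ 1 / 2) (x : E) :
    ∃ ξ, IsControlledPath F T x (fun _ => v) ξ := by
  lift T to NNReal using hT
  set a : NNReal := 2 * ‖F x v‖₊ * T
  have hPL : IsPicardLindelof (fun _ y => F y v) (tmin := 0) (tmax := T) ⟨0, le_rfl, T.2⟩ x a 0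
      (‖F x v‖₊ + K * a) K := by
    refine .of_time_independent (fun y hy => ?_) hK.lipschitzOnWith ?_
    · calc ‖F y v‖ ≤ ‖F x v‖ + ‖F y v - F x v‖ := norm_le_insert' _ _
        _ ≤ ‖F x v‖ + K * ‖y - x‖ := by gcongr; exact hK.norm_sub_le _ _
        _ ≤ ‖F x v‖ + K * a := by gcongr; exact mem_closedBall_iff_norm.1 hy
    · have ha : (a : ℝ) = 2 * ‖F x v‖ * T := by simp [a]
      have habsorb := mul_le_mul_of_nonneg_right hKT a.coe_nonneg
      simp only [NNReal.coe_add, NNReal.coe_mul, coe_nnnorm, NNReal.coe_zero, sub_zero,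
        max_eq_left T.coe_nonneg]
      linarith
  obtain ⟨γ, hγ⟩ := ODE.FunSpace.exists_isFixedPt_next hPL (x := x) (by simp)
  refine ⟨γ.compProj, measurable_const, γ.continuous_compProj, fun t ht => ?_⟩
  conv_lhs => rw [← hγ]
  rw [ODE.FunSpace.compProj_apply, ODE.FunSpace.next_apply, projIcc_of_mem _ ht]
  rfl

end IsControlledPath

/-! ### From barrier paths to viscosity decay -/

/-- The viscosity CBF condition for the control system `y' = F y v`: where `h > 0`, some control
achieves `h' ≥ -α h`, tested on `C¹` functions touching `h` from above. The maximum over the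
controls is replaced by the existence of a control. -/
def HasViscosityDecay {E V : Type*} [NormedAddCommGroup E] [NormedSpace ℝ E] (F : E → V → E)
    (α : ℝ → ℝ) (h : E → ℝ) : Prop :=
  ∀ x, 0 < h x → ∀ φ : E → ℝ, ContDiff ℝ 1 φ → IsLocalMax (fun y => h y - φ y) x →
    ∃ v, -α (h x) ≤ fderiv ℝ φ x (F x v)

/-- The Barrier Guarantee for the control system `y' = F y v`: for each `θ < 1`, some controlled
path from `x` keeps `h` above the decay curve `β (θ * h x)`. -/
def HasBarrierPaths {E V : Type*} [NormedAddCommGroup E] [NormedSpace ℝ E] [MeasurableSpace V]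
    (F : E → V → E) (β : ℝ → ℝ → ℝ) (h : E → ℝ) : Prop :=
  ∀ θ ∈ Ico (0 : ℝ) 1, ∀ x, 0 < h x →
    ∃ u ξ, (∀ T, IsControlledPath F T x u ξ) ∧ ∀ t, 0 ≤ t → β (θ * h x) t ≤ h (ξ t)

lemma eventually_mul_lt_nhdsGT_zero (a : ℝ) {b : ℝ} (hb : 0 < b) :
    ∀ᶠ t in 𝓝[>] (0 : ℝ), a * t < b :=
  (((by fun_prop : Continuous fun t : ℝ => a * t).tendsto' 0 0 (mul_zero a)).mono_left
    nhdsWithin_le_nhds).eventually_lt_const hb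

lemma exists_pos_forall_norm_le_of_mem {E V : Type*} [NormedAddCommGroup E] [TopologicalSpace V]
    [CompactSpace V] {F : E → V → E} (hF : Continuous (Function.uncurry F)) {Z : Set E}
    (hZ : IsCompact Z) : ∃ C > 0, ∀ y ∈ Z, ∀ v, ‖F y v‖ ≤ C := by
  obtain ⟨C, hC, hCF⟩ := ((hZ.prod isCompact_univ).image hF).isBounded.exists_pos_norm_le
    (s := Function.uncurry F '' (Z ×ˢ univ))
  exact ⟨C, hC, fun y hy v => hCF _ ⟨(y, v), ⟨hy, mem_univ v⟩, rfl⟩⟩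

namespace IsControlledPath

variable {E V : Type*} [NormedAddCommGroup E] [NormedSpace ℝ E] [MeasurableSpace V]
  [TopologicalSpace V] [CompactSpace V] {F : E → V → E} {x : E} {K : NNReal}

lemma eventually_forall_mem (hF : Continuous (Function.uncurry F))
    (hK : ∀ v, LipschitzWith K fun y => F y v) {s : Set E} (hs : s ∈ 𝓝 x) :
    ∀ᶠ t in 𝓝[>] (0 : ℝ), ∀ u ξ, IsControlledPath F t x u ξ → ξ t ∈ s := by
  obtain ⟨C, -, hC⟩ := exists_pos_forall_norm_le_of_mem hF (isCompact_singleton (x := x))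
  obtain ⟨r, hr, hrs⟩ := Metric.mem_nhds_iff.1 hs
  have hKt : ∀ᶠ t : ℝ in 𝓝[>] 0, K * t < 1 / 2 := eventually_mul_lt_nhdsGT_zero _ (by norm_num)
  have hCt : ∀ᶠ t in 𝓝[>] (0 : ℝ), 2 * C * t < r := eventually_mul_lt_nhdsGT_zero _ hr
  filter_upwards [hKt, hCt, self_mem_nhdsWithin] with t hKt hCt ht u ξ hξ
  exact hrs (mem_ball_iff_norm.2
    ((hξ.norm_sub_le hK hKt.le (hC x rfl) t ⟨ht.le, le_rfl⟩).trans_lt hCt))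

variable [TopologicalSpace.PseudoMetrizableSpace V] [OpensMeasurableSpace V] [CompleteSpace E]

lemma map_sub_le {T : ℝ} {u : ℝ → V} {ξ : ℝ → E} (h : IsControlledPath F T x u ξ)
    (hF : Continuous (Function.uncurry F)) (hK : ∀ v, LipschitzWith K fun y => F y v)
    (hKT : K * T ≤ 1 / 2) {C : ℝ} (hC : ∀ v, ‖F x v‖ ≤ C) (G : E →L[ℝ] ℝ) {S : ℝ}
    (hS : ∀ v, G (F x v) ≤ S) {t : ℝ} (ht : t ∈ Icc 0 T) :
    G (ξ t - x) ≤ t * S + ‖G‖ * (2 * K * C * t ^ 2) := by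
  have hint := intervalIntegrable_uncurry_of_continuous hF h.measurable
    (continuous_const (y := x)) 0 t
  have hGint : G (∫ s in (0 : ℝ)..t, F x (u s)) ≤ t * S := by
    rw [← G.intervalIntegral_comp_comm hint]
    simpa using intervalIntegral.integral_mono ht.1
      ⟨G.integrable_comp hint.1, G.integrable_comp hint.2⟩ (intervalIntegrable_const (c := S))
      fun s => hS (u s)
  have hGerr : G (ξ t - x - ∫ s in (0 : ℝ)..t, F x (u s)) ≤ ‖G‖ * (2 * K * C * t ^ 2) :=
    (le_abs_self _).trans (G.le_opNorm_of_le (h.norm_sub_sub_integral_le hF hK hKT hC ht))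
  rw [map_sub] at hGerr
  linarith

lemma eventually_forall_apply_le (hF : Continuous (Function.uncurry F))
    (hK : ∀ v, LipschitzWith K fun y => F y v) {φ : E → ℝ} {G : E →L[ℝ] ℝ}
    (hφ : HasFDerivAt φ G x) {S ε : ℝ} (hS : ∀ v, G (F x v) ≤ S) (hε : 0 < ε) :
    ∀ᶠ t in 𝓝[>] (0 : ℝ), ∀ u ξ, IsControlledPath F t x u ξ → φ (ξ t) ≤ φ x + t * (S + ε) := by
  obtain ⟨C, hC0, hC⟩ := exists_pos_forall_norm_le_of_mem hF (isCompact_singleton (x := x))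
  have herr := hφ.isLittleO.def (c := ε / (4 * C)) (by positivity)
  have hKt : ∀ᶠ t : ℝ in 𝓝[>] 0, K * t < 1 / 2 := eventually_mul_lt_nhdsGT_zero _ (by norm_num)
  have hGt : ∀ᶠ t in 𝓝[>] (0 : ℝ), ‖G‖ * (2 * K * C) * t < ε / 2 :=
    eventually_mul_lt_nhdsGT_zero _ (by positivity)
  filter_upwards [hKt, hGt, eventually_forall_mem hF hK herr, self_mem_nhdsWithin]
    with t hKt hGt hmem ht u ξ hξ
  have hGξ := hξ.map_sub_le hF hK hKt.le (hC x rfl) G hS ⟨ht.le, le_rfl⟩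
  have hφξ : φ (ξ t) - φ x - G (ξ t - x) ≤ t * (ε / 2) :=
    calc φ (ξ t) - φ x - G (ξ t - x) ≤ ε / (4 * C) * ‖ξ t - x‖ :=
          (le_abs_self _).trans (hmem u ξ hξ)
      _ ≤ ε / (4 * C) * (2 * C * t) := by
          gcongr
          exact hξ.norm_sub_le hK hKt.le (hC x rfl) t ⟨ht.le, le_rfl⟩
      _ = t * (ε / 2) := by field_simp; ring
  have hGt' := mul_lt_mul_of_pos_left hGt ht
  linarith

end IsControlledPath

theorem HasBarrierPaths.hasViscosityDecay {E V : Type*} [NormedAddCommGroup E] [NormedSpace ℝ E]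
    [CompleteSpace E] [TopologicalSpace V] [CompactSpace V]
    [TopologicalSpace.PseudoMetrizableSpace V] [MeasurableSpace V] [OpensMeasurableSpace V]
    {F : E → V → E} {K : NNReal} {α : ℝ → ℝ} {β : ℝ → ℝ → ℝ} {h : E → ℝ}
    (hF : Continuous (Function.uncurry F)) (hK : ∀ v, LipschitzWith K fun y => F y v)
    (hα : LocallyLipschitzOn (Ici 0) α) (hβ : IsBetaFor α β) (hB : HasBarrierPaths F β h) :
    HasViscosityDecay F α h := by
  intro x hx φ hφ hmax
  obtain ⟨u₀, -⟩ := hB 0 ⟨le_rfl, one_pos⟩ x hx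
  have hcont : Continuous fun v => fderiv ℝ φ x (F x v) :=
    (fderiv ℝ φ x).continuous.comp (hF.comp (Continuous.prodMk_right x))
  obtain ⟨v, -, hv⟩ := isCompact_univ.exists_isMaxOn ⟨u₀ 0, mem_univ _⟩ hcont.continuousOn
  refine ⟨v, le_of_forall_pos_le_add fun ε hε => hβ.neg_le_of_eventually_le hx.le ?_⟩
  have hφx : HasFDerivAt φ (fderiv ℝ φ x) x := (hφ.differentiable one_ne_zero x).hasFDerivAt
  filter_upwards [IsControlledPath.eventually_forall_mem hF hK hmax,
    IsControlledPath.eventually_forall_apply_le hF hK hφx (fun w => hv (mem_univ w)) hε,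
    self_mem_nhdsWithin] with t hmax ht htpos
  refine hβ.le_of_forall_mul_le hα hx.le htpos.le fun θ hθ => ?_
  obtain ⟨u, ξ, hξ, hβξ⟩ := hB θ hθ x hx
  have hhφ : h (ξ t) - φ (ξ t) ≤ h x - φ x := hmax u ξ (hξ t)
  linarith [hβξ t htpos.le, ht u ξ (hξ t)]

/-! ### Sup-convolution -/

/-- The sup-convolution of `h` over `Z` with parameter `l`, a regularization of `h` from above.
The penalty is taken in a Hilbert space `H` through the linear isomorphism `e`, so that it
is smooth whatever the norm of `E`. -/
def supConv {E H : Type*} [NormedAddCommGroup E] [NormedSpace ℝ E] [NormedAddCommGroup H]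
    [InnerProductSpace ℝ H] (e : E ≃L[ℝ] H) (h : E → ℝ) (Z : Set E) (l : ℝ) (y : E) : ℝ :=
  sSup ((fun z => h z - l * ‖e (z - y)‖ ^ 2) '' Z)

lemma norm_sub_sq_le_of_norm_sub_smul_le {H : Type*} [NormedAddCommGroup H]
    [InnerProductSpace ℝ H] {a b w : H} {s c₁ c₂ : ℝ} (hw : ‖w‖ ≤ c₁ * s)
    (hwb : ‖w - s • b‖ ≤ c₂ * s ^ 2) :
    ‖a - w‖ ^ 2 ≤ ‖a‖ ^ 2 - s * (2 * inner ℝ a b) + (2 * ‖a‖ * c₂ + c₁ ^ 2) * s ^ 2 := by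
  have hinner : -(‖a‖ * (c₂ * s ^ 2)) ≤ inner ℝ a (w - s • b) :=
    (neg_le_neg (mul_le_mul_of_nonneg_left hwb (norm_nonneg a))).trans
      (neg_le_of_abs_le (abs_real_inner_le_norm _ _))
  have hsq : ‖w‖ ^ 2 ≤ (c₁ * s) ^ 2 := pow_le_pow_left₀ (norm_nonneg w) hw 2
  rw [inner_sub_right, inner_smul_right] at hinner
  rw [norm_sub_sq_real]
  linarith

section SupConv

variable {E H : Type*} [NormedAddCommGroup E] [NormedSpace ℝ E] [NormedAddCommGroup H]
  [InnerProductSpace ℝ H] {e : E ≃L[ℝ] H} {h : E → ℝ} {Z : Set E} {l : ℝ} {y z : E}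

lemma le_supConv (hZ : IsCompact Z) (hh : Continuous h) (hz : z ∈ Z) :
    h z - l * ‖e (z - y)‖ ^ 2 ≤ supConv e h Z l y :=
  le_csSup (hZ.image (by fun_prop)).bddAbove (mem_image_of_mem _ hz)

lemma self_le_supConv (hZ : IsCompact Z) (hh : Continuous h) (hy : y ∈ Z) :
    h y ≤ supConv e h Z l y := by
  simpa using le_supConv (e := e) (l := l) (y := y) hZ hh hy

lemma exists_supConv_eq (hZ : IsCompact Z) (hZne : Z.Nonempty) (hh : Continuous h) (e : E ≃L[ℝ] H)
    (l : ℝ) (y : E) :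
    ∃ z ∈ Z, supConv e h Z l y = h z - l * ‖e (z - y)‖ ^ 2 ∧
      IsMaxOn (fun w => h w - l * ‖e (w - y)‖ ^ 2) Z z := by
  obtain ⟨z, hz, hzmax⟩ := hZ.exists_isMaxOn hZne
    (by fun_prop : ContinuousOn (fun w => h w - l * ‖e (w - y)‖ ^ 2) Z)
  refine ⟨z, hz, le_antisymm (csSup_le (hZne.image _) ?_) (le_supConv hZ hh hz), hzmax⟩
  rintro _ ⟨w, hw, rfl⟩
  exact hzmax hw

lemma supConv_le {A : ℝ} (hZne : Z.Nonempty) (hA : ∀ z ∈ Z, h z ≤ A) (hl : 0 ≤ l) :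
    supConv e h Z l y ≤ A := by
  refine csSup_le (hZne.image _) ?_
  rintro _ ⟨z, hz, rfl⟩
  exact (sub_le_self _ (by positivity)).trans (hA z hz)

lemma exists_forall_mul_norm_sq_le_imp (hZ : IsCompact Z) (hh : Continuous h) (e : E ≃L[ℝ] H)
    {η : ℝ} (hη : 0 < η) :
    ∃ l > 0, ∀ y ∈ Z, ∀ z ∈ Z, l * ‖e (z - y)‖ ^ 2 ≤ h z → ‖z - y‖ < η ∧ |h z - h y| < η := by
  obtain ⟨ρ, hρ, hhρ⟩ := Metric.uniformContinuousOn_iff.1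
    (hZ.uniformContinuousOn_of_continuous hh.continuousOn) η hη
  obtain ⟨A, hA, hhA⟩ := (hZ.image hh).isBounded.exists_pos_norm_le
  obtain ⟨c, hc, hec⟩ := (e.symm : H →L[ℝ] E).bound
  have hκ : 0 < min ρ η / c := div_pos (lt_min hρ hη) hc
  refine ⟨2 * A / (min ρ η / c) ^ 2, div_pos (by positivity) (pow_pos hκ 2),
    fun y hy z hz hle => ?_⟩
  have hzA : h z ≤ A := (le_abs_self _).trans (hhA _ (mem_image_of_mem _ hz))
  have hnorm : ‖z - y‖ < min ρ η := by
    by_contra! hfar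
    have hezy : min ρ η / c ≤ ‖e (z - y)‖ := by
      rw [div_le_iff₀' hc]
      exact hfar.trans (by simpa using hec (e (z - y)))
    have : 2 * A ≤ 2 * A / (min ρ η / c) ^ 2 * ‖e (z - y)‖ ^ 2 := by
      rw [div_mul_eq_mul_div, le_div_iff₀ (pow_pos hκ 2)]
      gcongr
    linarith
  exact ⟨hnorm.trans_le (min_le_right _ _),
    hhρ z hz y hy (by rw [dist_eq_norm]; exact hnorm.trans_le (min_le_left _ _))⟩

lemma exists_supConv_eq_of_closedBall_subset (hZ : IsCompact Z) (hh : Continuous h)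
    (e : E ≃L[ℝ] H) {η : ℝ} (hη : 0 < η) (hη1 : η ≤ 1) :
    ∃ l > 0, ∀ y, Metric.closedBall y 1 ⊆ Z → 0 < supConv e h Z l y →
      ∃ z ∈ Z, supConv e h Z l y = h z - l * ‖e (z - y)‖ ^ 2 ∧
        IsLocalMax (fun w => h w - l * ‖e (w - y)‖ ^ 2) z ∧ ‖z - y‖ < η ∧ h z < h y + η := by
  obtain ⟨l, hl, hpen⟩ := exists_forall_mul_norm_sq_le_imp hZ hh e hη
  refine ⟨l, hl, fun y hyZ hpos => ?_⟩
  have hy : y ∈ Z := hyZ (Metric.mem_closedBall_self zero_le_one)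
  obtain ⟨z, hz, hzeq, hzmax⟩ := exists_supConv_eq hZ ⟨y, hy⟩ hh e l y
  obtain ⟨hzy, hhzy⟩ := hpen y hy z hz (by linarith)
  have hzZ : Z ∈ 𝓝 z := mem_of_superset
    (Metric.isOpen_ball.mem_nhds (mem_ball_iff_norm.2 (hzy.trans_le hη1)))
    (Metric.ball_subset_closedBall.trans hyZ)
  exact ⟨z, hz, hzeq, hzmax.isLocalMax hzZ, hzy, by linarith [(abs_lt.1 hhzy).2]⟩

variable {V : Type*} {F : E → V → E} {α : ℝ → ℝ}

lemma HasViscosityDecay.exists_neg_le_inner (hV : HasViscosityDecay F α h) (hz : 0 < h z)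
    (hmax : IsLocalMax (fun w => h w - l * ‖e (w - y)‖ ^ 2) z) :
    ∃ v, -α (h z) ≤ l * (2 * inner ℝ (e (z - y)) (e (F z v))) := by
  have hderiv : HasFDerivAt (fun w => l * ‖e (w - y)‖ ^ 2)
      (l • 2 • (innerSL ℝ (e (z - y))).comp (e : E →L[ℝ] H)) z :=
    ((e.hasFDerivAt.comp z ((hasFDerivAt_id z).sub_const y)).norm_sq).const_mul l
  have hsmooth : ContDiff ℝ 1 fun w => l * ‖e (w - y)‖ ^ 2 :=
    contDiff_const.mul ((e.contDiff.comp (contDiff_id.sub contDiff_const)).norm_sq ℝ)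
  obtain ⟨v, hv⟩ := hV z hz _ hsmooth hmax
  rw [hderiv.fderiv] at hv
  exact ⟨v, by simpa [inner_sub_left] using hv⟩

lemma exists_forall_norm_map_sub_le {K : NNReal} (hK : ∀ v, LipschitzWith K fun y => F y v)
    (e : E ≃L[ℝ] H) :
    ∃ c ≥ 0, ∀ v y z, ‖e (F z v - F y v)‖ ≤ c * ‖e (z - y)‖ := by
  obtain ⟨c, hc⟩ : ∃ c : NNReal, ∀ v, LipschitzWith c fun a => e (F (e.symm a) v) :=
    ⟨_, fun v => e.lipschitz.comp ((hK v).comp e.symm.lipschitz)⟩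
  refine ⟨c, c.2, fun v y z => ?_⟩
  simpa using (hc v).norm_sub_le (e z) (e y)

lemma HasViscosityDecay.exists_forall_neg_le_inner (hV : HasViscosityDecay F α h)
    (hα : LocallyLipschitzOn (Ici 0) α) (hh : Continuous h) {K : NNReal}
    (hK : ∀ v, LipschitzWith K fun y => F y v) (hZ : IsCompact Z) (e : E ≃L[ℝ] H) {ε : ℝ}
    (hε : 0 < ε) :
    ∃ l > 0, ∀ y, Metric.closedBall y 1 ⊆ Z → 0 < supConv e h Z l y →
      supConv e h Z l y < h y + ε ∧
      ∃ z ∈ Z, supConv e h Z l y = h z - l * ‖e (z - y)‖ ^ 2 ∧ ‖z - y‖ ≤ 1 ∧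
        ∃ v, -(α (supConv e h Z l y) + ε) ≤ l * (2 * inner ℝ (e (z - y)) (e (F y v))) := by
  obtain ⟨A, hA⟩ := (hZ.image hh).bddAbove
  obtain ⟨L, hL⟩ := (hα.mono
    (Icc_subset_Ici_self : Icc 0 A ⊆ _)).exists_lipschitzOnWith_of_compact isCompact_Icc
  obtain ⟨c, hc, hcF⟩ := exists_forall_norm_map_sub_le hK e
  have hη : 0 < min 1 (ε / (L + 2 * c + 1)) := lt_min one_pos (by positivity)
  obtain ⟨l, hl, hlmax⟩ := exists_supConv_eq_of_closedBall_subset hZ hh e hη (min_le_left _ _)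
  set η := min 1 (ε / (L + 2 * c + 1))
  have hηε : η * (L + 2 * c + 1) ≤ ε := (le_div_iff₀ (by positivity)).1 (min_le_right _ _)
  refine ⟨l, hl, fun y hyZ hpos => ?_⟩
  obtain ⟨z, hz, hzeq, hzmax, hzy, hhz⟩ := hlmax y hyZ hpos
  set S := supConv e h Z l y
  have hq : 0 ≤ l * ‖e (z - y)‖ ^ 2 := by positivity
  have hqη : l * ‖e (z - y)‖ ^ 2 ≤ η := by
    have hy : y ∈ Z := hyZ (Metric.mem_closedBall_self zero_le_one)
    linarith [self_le_supConv (e := e) (l := l) hZ hh hy]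
  have hη_le : η ≤ ε := by nlinarith [mul_nonneg hη.le L.coe_nonneg, mul_nonneg hη.le hc]
  obtain ⟨v, hv⟩ := hV.exists_neg_le_inner (by linarith : 0 < h z) hzmax
  refine ⟨by linarith, z, hz, hzeq, hzy.le.trans (min_le_left _ _), v, ?_⟩
  have hzA : h z ≤ A := hA (mem_image_of_mem h hz)
  have hαz : α (h z) - α S ≤ L * η := by
    have hdist := hL.dist_le_mul (h z) ⟨by linarith, hzA⟩ S ⟨hpos.le, by linarith⟩
    rw [Real.dist_eq, Real.dist_eq, hzeq, sub_sub_cancel, abs_of_nonneg hq, ← hzeq] at hdist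
    exact (le_of_abs_le hdist).trans (mul_le_mul_of_nonneg_left hqη L.coe_nonneg)
  have hFz : l * inner ℝ (e (z - y)) (e (F z v - F y v)) ≤ c * η := by
    calc l * inner ℝ (e (z - y)) (e (F z v - F y v))
        ≤ l * (‖e (z - y)‖ * (c * ‖e (z - y)‖)) := by
          gcongr
          exact (real_inner_le_norm _ _).trans (by gcongr; exact hcF v y z)
      _ = c * (l * ‖e (z - y)‖ ^ 2) := by ring
      _ ≤ c * η := by gcongr
  rw [map_sub e (F z v), inner_sub_right] at hFz
  linarith

variable [TopologicalSpace V] [CompactSpace V] [TopologicalSpace.PseudoMetrizableSpace V]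
  [MeasurableSpace V] [OpensMeasurableSpace V]

lemma IsControlledPath.norm_map_sub_sq_le [CompleteSpace E] {T : ℝ} {v : V} {ξ : ℝ → E}
    {K : NNReal} (hξ : IsControlledPath F T y (fun _ => v) ξ)
    (hF : Continuous (Function.uncurry F)) (hK : ∀ v, LipschitzWith K fun y => F y v)
    (hKT : K * T ≤ 1 / 2) {C : ℝ} (hC : ∀ v, ‖F y v‖ ≤ C) (e : E ≃L[ℝ] H) (z : E) {t : ℝ}
    (ht : t ∈ Icc 0 T) :
    ‖e (z - ξ t)‖ ^ 2 ≤ ‖e (z - y)‖ ^ 2 - t * (2 * inner ℝ (e (z - y)) (e (F y v))) +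
      (2 * ‖e (z - y)‖ * (‖(e : E →L[ℝ] H)‖ * (2 * K * C)) +
        (‖(e : E →L[ℝ] H)‖ * (2 * C)) ^ 2) * t ^ 2 := by
  have hw : ‖e (ξ t - y)‖ ≤ ‖(e : E →L[ℝ] H)‖ * (2 * C) * t := by
    rw [mul_assoc]
    exact (e : E →L[ℝ] H).le_opNorm_of_le (hξ.norm_sub_le hK hKT hC t ht)
  have hwb : ‖e (ξ t - y) - t • e (F y v)‖ ≤ ‖(e : E →L[ℝ] H)‖ * (2 * K * C) * t ^ 2 := by
    have hint := hξ.norm_sub_sub_integral_le hF hK hKT hC ht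
    rw [intervalIntegral.integral_const, sub_zero] at hint
    rw [← map_smul, ← map_sub, mul_assoc]
    exact (e : E →L[ℝ] H).le_opNorm_of_le hint
  have hexp := norm_sub_sq_le_of_norm_sub_smul_le (a := e (z - y)) hw hwb
  rwa [← map_sub, sub_sub_sub_cancel_right] at hexp

/-- The maximizer `z` in the definition of the sup-convolution at `y` is held fixed as a competitor
along the path, so that only the smooth penalty varies. -/
lemma HasViscosityDecay.exists_forall_supConv_sub_le [CompleteSpace E]
    (hV : HasViscosityDecay F α h)
    (hα : LocallyLipschitzOn (Ici 0) α) (hh : Continuous h) (hF : Continuous (Function.uncurry F))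
    {K : NNReal} (hK : ∀ v, LipschitzWith K fun y => F y v) (hZ : IsCompact Z) (e : E ≃L[ℝ] H)
    {ε : ℝ} (hε : 0 < ε) :
    ∃ l > 0, ∃ δ > 0, ∀ y, Metric.closedBall y 1 ⊆ Z → 0 < supConv e h Z l y →
      supConv e h Z l y < h y + ε ∧
      ∃ v, ∀ T ≤ δ, ∀ ζ, IsControlledPath F T y (fun _ => v) ζ → ∀ s ∈ Icc 0 T,
        supConv e h Z l y - s * (α (supConv e h Z l y) + ε) ≤ supConv e h Z l (ζ s) := by
  obtain ⟨l, hl, hinner⟩ := hV.exists_forall_neg_le_inner hα hh hK hZ e (half_pos hε)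
  obtain ⟨C, hC, hCF⟩ := exists_pos_forall_norm_le_of_mem hF hZ
  set N := ‖(e : E →L[ℝ] H)‖
  set D : ℝ := 2 * N * (N * (2 * K * C)) + (N * (2 * C)) ^ 2
  refine ⟨l, hl, min (1 / (2 * (K + 1))) (ε / (2 * (l * D + 1))), by positivity,
    fun y hyZ hpos => ?_⟩
  obtain ⟨hlt, z, hz, hzeq, hzy, v, hv⟩ := hinner y hyZ hpos
  refine ⟨by linarith, v, fun T hT ζ hζ s hs => ?_⟩
  have hKT : K * T ≤ 1 / 2 := by
    have := (le_div_iff₀ (by positivity)).1 (hT.trans (min_le_left _ _))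
    linarith [hs.1.trans hs.2]
  have hDs : (l * D) * s ≤ ε / 2 := by
    have := (le_div_iff₀ (by positivity)).1 (hs.2.trans (hT.trans (min_le_right _ _)))
    linarith [hs.1]
  have hnorm : ‖e (z - ζ s)‖ ^ 2 ≤
      ‖e (z - y)‖ ^ 2 - s * (2 * inner ℝ (e (z - y)) (e (F y v))) + D * s ^ 2 := by
    refine (hζ.norm_map_sub_sq_le hF hK hKT
      (hCF y (hyZ (Metric.mem_closedBall_self zero_le_one))) e z hs).trans ?_
    have hN : ‖e (z - y)‖ ≤ N := by simpa using (e : E →L[ℝ] H).le_opNorm_of_le hzy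
    have hcoef : 2 * ‖e (z - y)‖ * (N * (2 * K * C)) + (N * (2 * C)) ^ 2 ≤ D := by
      simp only [D]
      gcongr
    gcongr
  have hpenalty := mul_le_mul_of_nonneg_left hnorm hl.le
  have hdrift := mul_le_mul_of_nonneg_left hv hs.1
  have herror := mul_le_mul_of_nonneg_left hDs hs.1
  linarith [le_supConv (e := e) (l := l) (y := ζ s) hZ hh hz]

end SupConv

/-! ### From viscosity decay to barrier paths -/

namespace IsControlledPath

variable {E V : Type*} [NormedAddCommGroup E] [NormedSpace ℝ E] [MeasurableSpace V]
  {F : E → V → E} {x : E} {δ : ℝ} {K : NNReal}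

lemma norm_sub_le_mul_add {y : E} {u : ℝ → V} {ξ : ℝ → E} (h : IsControlledPath F δ y u ξ)
    (hK : ∀ v, LipschitzWith K fun y => F y v) (hKδ : K * δ ≤ 1 / 2) {C R : ℝ}
    (hC : ∀ v, ‖F x v‖ ≤ C) (hyR : ‖y - x‖ ≤ R) {t : ℝ} (hyt : ‖y - x‖ ≤ 2 * (C + K * R) * t)
    {s : ℝ} (hs : s ∈ Icc 0 δ) : ‖ξ s - x‖ ≤ 2 * (C + K * R) * (t + s) := by
  have hCy : ∀ v, ‖F y v‖ ≤ C + K * R := fun v =>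
    calc ‖F y v‖ ≤ ‖F x v‖ + ‖F y v - F x v‖ := norm_le_insert' _ _
      _ ≤ C + K * ‖y - x‖ := add_le_add (hC v) ((hK v).norm_sub_le _ _)
      _ ≤ C + K * R := by gcongr
  calc ‖ξ s - x‖ ≤ ‖ξ s - y‖ + ‖y - x‖ := norm_sub_le_norm_sub_add_norm_sub _ _ _
    _ ≤ 2 * (C + K * R) * s + 2 * (C + K * R) * t :=
      add_le_add (h.norm_sub_le hK hKδ hCy s hs) hyt
    _ = 2 * (C + K * R) * (t + s) := by ring

variable [TopologicalSpace V] [CompactSpace V] [TopologicalSpace.PseudoMetrizableSpace V]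
  [OpensMeasurableSpace V] [CompleteSpace E]

lemma exists_forall_mem_Icc_of_step (hF : Continuous (Function.uncurry F))
    (hK : ∀ v, LipschitzWith K fun y => F y v) (hδ : 0 < δ) (hKδ : K * δ ≤ 1 / 2) {T : ℝ}
    (hT : 0 ≤ T) {P : ℝ → E → Prop}
    (step : ∀ t ∈ Icc 0 T, ∀ y, P t y →
      ∃ v, ∀ ξ, IsControlledPath F δ y (fun _ => v) ξ →
        ∀ s ∈ Icc 0 δ, t + s ≤ T → P (t + s) (ξ s)) (hx : P 0 x) :
    ∃ u ξ, IsControlledPath F T x u ξ ∧ ∀ t ∈ Icc 0 T, P t (ξ t) := by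
  obtain ⟨v₀, -⟩ := step 0 ⟨le_rfl, hT⟩ x hx
  obtain ⟨u, ξ, hξ, hP⟩ := exists_forall_of_step (P := fun t y => t ≤ T → P t y) hF hδ
    (fun t ht y hy => by
      obtain ⟨v, hv⟩ : ∃ v, ∀ ξ, IsControlledPath F δ y (fun _ => v) ξ →
          ∀ s ∈ Icc 0 δ, t + s ≤ T → P (t + s) (ξ s) := by
        rcases le_or_gt t T with htT | htT
        · exact step t ⟨ht, htT⟩ y (hy htT)
        · exact ⟨v₀, fun _ _ s hs hts => absurd hts (by linarith [hs.1])⟩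
      obtain ⟨ξ, hξ⟩ := exists_const (hK v) hδ.le hKδ y
      exact ⟨_, ξ, hξ, hv ξ hξ⟩) fun _ => hx
  exact ⟨u, ξ, hξ T, fun t ht => hP t ht.1 ht.2⟩

end IsControlledPath

namespace HasViscosityDecay

variable {E V : Type*} [NormedAddCommGroup E] [NormedSpace ℝ E] [FiniteDimensional ℝ E]
  [TopologicalSpace V] [CompactSpace V] [TopologicalSpace.PseudoMetrizableSpace V]
  [MeasurableSpace V] [OpensMeasurableSpace V] {F : E → V → E} {K : NNReal} {α : ℝ → ℝ}
  {h : E → ℝ}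

lemma exists_forall_mem_Icc_lt_of_mul_le (hV : HasViscosityDecay F α h)
    (hF : Continuous (Function.uncurry F)) (hK : ∀ v, LipschitzWith K fun y => F y v)
    (hα : LocallyLipschitzOn (Ici 0) α) (hh : Continuous h) {T : ℝ} (hT : 0 < T)
    (hKT : K * T ≤ 1 / 2) {b : ℝ → ℝ} {r : ℝ}
    (hb : ∀ t, 0 ≤ t → b t ∈ Icc 0 r ∧ HasDerivWithinAt b (-α (b t)) (Ici 0) t) {x : E}
    (hx : b 0 < h x) {C R : ℝ} (hC : ∀ v, ‖F x v‖ ≤ C) (hR : 0 ≤ R)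
    (hRT : 2 * (C + K * R) * T ≤ R) :
    ∃ u ξ, IsControlledPath F T x u ξ ∧ ∀ t ∈ Icc 0 T, b t < h (ξ t) := by
  have := FiniteDimensional.proper_real E
  have := FiniteDimensional.complete ℝ E
  have hRt : ∀ t ∈ Icc 0 T, 2 * (C + K * R) * t ≤ R := fun t ht => by
    nlinarith [mul_nonneg hR (sub_nonneg.2 ht.2), mul_le_mul_of_nonneg_right hRT ht.1]
  have hball : ∀ y, ‖y - x‖ ≤ R → Metric.closedBall y 1 ⊆ Metric.closedBall x (R + 1) :=
    fun y hy => Metric.closedBall_subset_closedBall' (by rw [dist_eq_norm]; linarith)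
  have hZ : IsCompact (Metric.closedBall x (R + 1)) := isCompact_closedBall _ _
  have hxZ : x ∈ Metric.closedBall x (R + 1) := Metric.mem_closedBall_self (by linarith)
  obtain ⟨A, hA⟩ := (hZ.image hh).bddAbove
  obtain ⟨p, c, δ₁, hc, hδ₁, hp0, hbp, hp⟩ :=
    exists_strict_subsolution (T := T) hα hb (sub_pos.2 hx) A
  obtain ⟨l, hl, δ₂, hδ₂, hstep⟩ :=
    hV.exists_forall_supConv_sub_le hα hh hF hK hZ (toEuclidean (E := E)) hc
  set S := supConv (toEuclidean (E := E)) h (Metric.closedBall x (R + 1)) l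
  have hS : ∀ t ∈ Icc 0 T, ∀ y, p t ≤ S y → 0 < S y := fun t ht y hy => by
    linarith [hbp t ht, (hb t ht.1).1.1]
  have hSA : ∀ y, S y ≤ A := fun y =>
    supConv_le ⟨x, hxZ⟩ (fun z hz => hA (mem_image_of_mem h hz)) hl.le
  have hδ : 0 < min δ₁ (min δ₂ T) := lt_min hδ₁ (lt_min hδ₂ hT)
  have hKδ : K * min δ₁ (min δ₂ T) ≤ 1 / 2 := (mul_le_mul_of_nonneg_left
    ((min_le_right _ _).trans (min_le_right _ _)) K.coe_nonneg).trans hKT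
  obtain ⟨u, ξ, hξ, hP⟩ := IsControlledPath.exists_forall_mem_Icc_of_step (x := x) hF hK hδ hKδ
    hT.le (P := fun t y => ‖y - x‖ ≤ 2 * (C + K * R) * t ∧ p t ≤ S y)
    (fun t ht y ⟨hyt, hpS⟩ => by
      obtain ⟨-, v, hv⟩ := hstep y (hball y (hyt.trans (hRt t ht))) (hS t ht y hpS)
      refine ⟨v, fun ζ hζ s hs hts =>
        ⟨hζ.norm_sub_le_mul_add hK hKδ hC (hyt.trans (hRt t ht)) hyt hs, ?_⟩⟩
      exact (hp t s ht.1 ⟨hs.1, hs.2.trans (min_le_left _ _)⟩ hts _ ⟨hpS, hSA y⟩).trans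
        (hv _ ((min_le_right _ _).trans (min_le_left _ _)) ζ hζ s hs))
    ⟨by simp, by simpa [hp0] using self_le_supConv hZ hh hxZ⟩
  refine ⟨u, ξ, hξ, fun t ht => ?_⟩
  obtain ⟨hxξ, hpξ⟩ := hP t ht
  linarith [hbp t ht, (hstep _ (hball _ (hxξ.trans (hRt t ht))) (hS t ht _ hpξ)).1]

lemma exists_forall_mem_Icc_lt (hV : HasViscosityDecay F α h)
    (hF : Continuous (Function.uncurry F)) (hK : ∀ v, LipschitzWith K fun y => F y v)
    (hα : LocallyLipschitzOn (Ici 0) α) (hh : Continuous h) {T : ℝ} (hT : 0 < T)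
    (hKT : K * T ≤ 1 / 4) {b : ℝ → ℝ} {r : ℝ}
    (hb : ∀ t, 0 ≤ t → b t ∈ Icc 0 r ∧ HasDerivWithinAt b (-α (b t)) (Ici 0) t) {x : E}
    (hx : b 0 < h x) :
    ∃ u ξ, IsControlledPath F T x u ξ ∧ ∀ t ∈ Icc 0 T, b t < h (ξ t) := by
  obtain ⟨C, hC, hCF⟩ := exists_pos_forall_norm_le_of_mem hF (isCompact_singleton (x := x))
  refine hV.exists_forall_mem_Icc_lt_of_mul_le hF hK hα hh hT (hKT.trans (by norm_num)) hb hx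
    (hCF x rfl) (R := 4 * C * T) (by positivity) ?_
  have := mul_le_mul_of_nonneg_right hKT (by positivity : 0 ≤ 8 * C * T)
  linarith

theorem hasBarrierPaths (hV : HasViscosityDecay F α h)
    (hF : Continuous (Function.uncurry F)) (hK : ∀ v, LipschitzWith K fun y => F y v)
    (hα : LocallyLipschitzOn (Ici 0) α) {β : ℝ → ℝ → ℝ} (hβ : IsBetaFor α β)
    (hh : Continuous h) : HasBarrierPaths F β h := by
  intro θ hθ x hx
  obtain ⟨hβ0, hβθ⟩ := hβ (θ * h x) (mul_nonneg hθ.1 hx.le)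
  have hT : (0 : ℝ) < 1 / (4 * (K + 1)) := by positivity
  have hKT : K * (1 / (4 * (K + 1)) : ℝ) ≤ 1 / 4 := by
    rw [mul_one_div, div_le_iff₀ (by positivity)]
    linarith
  obtain ⟨u, ξ, hξ, hlt⟩ := IsControlledPath.exists_forall_of_step
    (P := fun t y => β (θ * h x) t < h y) hF hT
    (fun t ht y hy => hV.exists_forall_mem_Icc_lt hF hK hα hh hT hKT
      (b := fun s => β (θ * h x) (t + s)) (r := θ * h x)
      (fun s hs => by
        have hts : 0 ≤ t + s := add_nonneg ht hs
        refine ⟨⟨(hβθ _ hts).1, (hβθ _ hts).2.1⟩, ?_⟩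
        have hderiv := (hβθ _ hts).2.2.scomp s ((hasDerivAt_id s).const_add t).hasDerivWithinAt
          fun τ (hτ : 0 ≤ τ) => add_nonneg ht hτ
        rwa [one_smul] at hderiv)
      (by simpa using hy))
    (by rw [hβ0]; exact mul_lt_of_lt_one_left hx hθ.2)
  exact ⟨u, ξ, hξ, fun t ht => (hlt t ht).le⟩

end HasViscosityDecay

theorem hasViscosityDecay_iff_hasBarrierPaths {E V : Type*} [NormedAddCommGroup E]
    [NormedSpace ℝ E] [FiniteDimensional ℝ E] [TopologicalSpace V] [CompactSpace V]
    [TopologicalSpace.PseudoMetrizableSpace V] [MeasurableSpace V] [OpensMeasurableSpace V]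
    {F : E → V → E} {K : NNReal} {α : ℝ → ℝ} {β : ℝ → ℝ → ℝ} {h : E → ℝ}
    (hF : Continuous (Function.uncurry F)) (hK : ∀ v, LipschitzWith K fun y => F y v)
    (hα : LocallyLipschitzOn (Ici 0) α) (hβ : IsBetaFor α β) (hh : Continuous h) :
    HasViscosityDecay F α h ↔ HasBarrierPaths F β h :=
  have := FiniteDimensional.complete ℝ E
  ⟨fun hV => hV.hasBarrierPaths hF hK hα hβ hh, fun hB => hB.hasViscosityDecay hF hK hα hβ⟩

/-! ### Control sets as types -/

section Translation

variable {n m : ℕ} {f : (Fin n → ℝ) → (Fin m → ℝ) → Fin n → ℝ} {U : Set (Fin m → ℝ)}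

lemma isTrajectory_iff_forall_isControlledPath {x : Fin n → ℝ} {u : ℝ → U} {ξ : ℝ → Fin n → ℝ}
    (hu : Measurable u) :
    IsTrajectory f x (fun t => (u t : Fin m → ℝ)) ξ ↔
      ∀ T, IsControlledPath (fun y (v : U) => f y v) T x u ξ :=
  ⟨fun hξ _ => ⟨hu, hξ.1, fun t ht => hξ.2 t ht.1⟩,
    fun hξ => ⟨(hξ 0).continuous, fun t ht => (hξ t).eq_add_integral t ⟨ht, le_rfl⟩⟩⟩

lemma IsTrajectory.congr_control {x : Fin n → ℝ} {u v : ℝ → Fin m → ℝ} {ξ : ℝ → Fin n → ℝ}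
    (hξ : IsTrajectory f x u ξ) (huv : EqOn u v (Ici 0)) : IsTrajectory f x v ξ := by
  refine ⟨hξ.1, fun t ht => ?_⟩
  rw [hξ.2 t ht]
  congr 1
  refine intervalIntegral.integral_congr fun s hs => ?_
  rw [uIcc_of_le ht] at hs
  simp only [huv hs.1]

lemma IsControl.exists_measurable_eqOn {u : ℝ → Fin m → ℝ} (hu : IsControl U u) :
    ∃ v : ℝ → U, Measurable v ∧ EqOn u (fun t => (v t : Fin m → ℝ)) (Ici 0) := by
  refine ⟨fun t => ⟨u |t|, hu.2 _ (abs_nonneg t)⟩,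
    (hu.1.comp measurable_id.abs).subtype_mk, fun t ht => ?_⟩
  simp only [abs_of_nonneg (mem_Ici.1 ht)]

lemma barrierGuarantee_iff_hasBarrierPaths {β : ℝ → ℝ → ℝ} {h : (Fin n → ℝ) → ℝ} :
    BarrierGuarantee f U β h ↔ HasBarrierPaths (fun y (v : U) => f y v) β h := by
  refine forall₄_congr fun θ _ x _ => ⟨?_, ?_⟩
  · rintro ⟨u, ξ, hu, hξ, hβ⟩
    obtain ⟨v, hv, huv⟩ := hu.exists_measurable_eqOn
    exact ⟨v, ξ, (isTrajectory_iff_forall_isControlledPath hv).1 (hξ.congr_control huv), hβ⟩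
  · rintro ⟨v, ξ, hξ, hβ⟩
    have hv := (hξ 0).measurable
    exact ⟨_, ξ, ⟨measurable_subtype_coe.comp hv, fun t _ => (v t).2⟩,
      (isTrajectory_iff_forall_isControlledPath hv).2 hξ, hβ⟩

lemma isViscosityCBF_iff_hasViscosityDecay (hU : IsCompact U) (hUne : U.Nonempty)
    (hf : ∀ y, ContinuousOn (f y) U) {α : ℝ → ℝ} {h : (Fin n → ℝ) → ℝ} (hh : Continuous h) :
    IsViscosityCBF f U α h ↔ HasViscosityDecay (fun y (v : U) => f y v) α h := by
  refine (and_iff_right hh).trans (forall₅_congr fun x _ φ _ _ => ?_)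
  have hcpt : IsCompact ((fun u => fderiv ℝ φ x (f x u)) '' U) :=
    hU.image_of_continuousOn ((fderiv ℝ φ x).continuous.comp_continuousOn (hf x))
  refine ⟨fun hle => ?_, fun ⟨v, hv⟩ => hv.trans (le_csSup hcpt.bddAbove ⟨v, v.2, rfl⟩)⟩
  obtain ⟨u, hu, hmax⟩ := hcpt.sSup_mem (hUne.image _)
  exact ⟨⟨u, hu⟩, hle.trans_eq hmax.symm⟩

end Translation

theorem isViscosityCBF_iff_barrierGuarantee_nonneg_general {n m : ℕ}
    (f : (Fin n → ℝ) → (Fin m → ℝ) → Fin n → ℝ) (U : Set (Fin m → ℝ))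
    (hU : IsCompact U) (hUne : U.Nonempty)
    (hf : ContinuousOn (Function.uncurry f) (Set.univ ×ˢ U))
    (hfK : ∃ K : NNReal, ∀ u ∈ U, LipschitzWith K fun y => f y u)
    (α : ℝ → ℝ) (hα : LocallyLipschitzOn (Ici 0) α)
    (β : ℝ → ℝ → ℝ) (hβ : IsBetaFor α β)
    (h : (Fin n → ℝ) → ℝ) (hh : Continuous h) :
    IsViscosityCBF f U α h ↔ BarrierGuarantee f U β h := by
  obtain ⟨K, hK⟩ := hfK
  have : CompactSpace U := isCompact_iff_compactSpace.1 hU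
  have hF : Continuous (Function.uncurry fun y (v : U) => f y v) :=
    hf.comp_continuous (f := fun p : (Fin n → ℝ) × U => (p.1, (p.2 : Fin m → ℝ)))
      (by fun_prop) fun p => ⟨mem_univ _, p.2.2⟩
  have hfy : ∀ y, ContinuousOn (f y) U := fun y =>
    hf.comp (f := fun u => (y, u)) (by fun_prop) fun u hu => ⟨mem_univ y, hu⟩
  rw [isViscosityCBF_iff_hasViscosityDecay hU hUne hfy hh, barrierGuarantee_iff_hasBarrierPaths]
  exact hasViscosityDecay_iff_hasBarrierPaths hF (fun v => hK v v.2) hα hβ hh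

/-- A continuous nonnegative `h` is a viscosity CBF w.r.t. `α` iff it provides
the Barrier Guarantee w.r.t. `α`. -/
theorem isViscosityCBF_iff_barrierGuarantee_nonneg {n m : ℕ}
    (f : (Fin n → ℝ) → (Fin m → ℝ) → Fin n → ℝ) (U : Set (Fin m → ℝ))
    (hU : IsCompact U) (hUne : U.Nonempty)
    (hf : ∃ K : NNReal, LipschitzOnWith K (Function.uncurry f) (Set.univ ×ˢ U))
    (α : ℝ → ℝ) (hα : IsLocallyLipschitzClassK α)
    (β : ℝ → ℝ → ℝ) (hβ : IsBetaFor α β)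
    (h : (Fin n → ℝ) → ℝ) (hh : Continuous h) (hh0 : ∀ x, 0 ≤ h x) :
    IsViscosityCBF f U α h ↔ BarrierGuarantee f U β h := by
  obtain ⟨K, hK⟩ := hf
  exact isViscosityCBF_iff_barrierGuarantee_nonneg_general f U hU hUne hK.continuousOn
    ⟨K * 1, fun u hu => lipschitzOnWith_univ.1 (hK.comp
      (LipschitzWith.prodMk_right u).lipschitzOnWith fun y _ => ⟨mem_univ y, hu⟩)⟩
    α (fun _ hx => hα.2 _ hx) β hβ h hh
end
end

section
/- Let α be a locally Lipschitz class K function and h : ℝ^n → ℝ be continuous (not necessarily non-negative). Then h is a viscosity CBF with respect to α if and only if h provides the Barrier Guarantee with respect to α. -/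
open Set Filter MeasureTheory Topology

noncomputable section

/-! Viscosity to barrier: on a compact ball the sup-convolution of `h` is uniformly close to `h`,
and its maximizers turn the viscosity inequality into a pointwise one along proximal subgradients,
up to a small error `η`. Holding a good control constant over short time steps then gives an Euler
scheme whose gap to the comparison curve `β_α(θ h(x), ·)` decays at most exponentially, apart from
an error of order `η`. The gap starts out strictly positive because `θ < 1`, so for small `η` it
stays positive up to a time depending only on the Lipschitz constant of `f`. Since strictness is
preserved, the construction can be restarted from the endpoint, and the pieces are glued.

Barrier to viscosity: apply the guarantee with `θ = 1 - t ^ 2` and follow its trajectory only up to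
time `t`. This yields points `z t` with `z t - x = O(t)`, `h (z t) ≥ h x - t α(h x) - O(t ^ 2)` and
`∇φ(x) · (z t - x) ≤ t max_u ∇φ(x) · f(x, u) + O(t ^ 2)`; comparing `h` with the test function `φ`
along `z t`, dividing by `t` and letting `t` tend to `0` gives the inequality. -/

lemma exp_neg_two_mul_le_one_sub {x : ℝ} (hx₀ : 0 ≤ x) (hx : x ≤ 1 / 2) :
    Real.exp (-(2 * x)) ≤ 1 - x := by
  have hexp : 0 < Real.exp (2 * x) := Real.exp_pos _
  rw [Real.exp_neg, inv_le_iff_one_le_mul₀ hexp]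
  calc (1 : ℝ) ≤ (1 - x) * (2 * x + 1) := by nlinarith
    _ ≤ (1 - x) * Real.exp (2 * x) :=
      mul_le_mul_of_nonneg_left (Real.add_one_le_exp _) (by linarith)

lemma forall_mem_Icc_of_forall_step {P : ℝ → Prop} {a b δ : ℝ} (hδ : 0 < δ) (ha : P a)
    (hstep : ∀ t ∈ Icc a b, P t → ∀ s ∈ Icc t (t + δ), s ≤ b → P s) :
    ∀ t ∈ Icc a b, P t := by
  have hnat : ∀ k : ℕ, ∀ t ∈ Icc a b, t ≤ a + k * δ → P t := by
    intro k
    induction k with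
    | zero =>
      intro t ht htk
      obtain rfl : t = a := le_antisymm (by simpa using htk) ht.1
      exact ha
    | succ k ih =>
      intro t ht htk
      push_cast at htk
      have hle : max a (t - δ) ≤ t := max_le ht.1 (by linarith)
      have hmem : max a (t - δ) ∈ Icc a b := ⟨le_max_left _ _, hle.trans ht.2⟩
      have hk : max a (t - δ) ≤ a + k * δ :=
        max_le (le_add_of_nonneg_right (by positivity)) (by linarith)
      exact hstep _ hmem (ih _ hmem hk) t ⟨hle, by linarith [le_max_right a (t - δ)]⟩ ht.2
  intro t ht
  obtain ⟨k, hk⟩ := exists_nat_ge ((t - a) / δ)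
  exact hnat k t ht (by linarith [(div_le_iff₀ hδ).1 hk])

lemma exists_forall_dist_le_imp_le_add {X : Type*} [PseudoMetricSpace X] {S : Set X}
    (hS : IsCompact S) {h : X → ℝ} (hh : ContinuousOn h S) {ε : ℝ} (hε : 0 < ε) :
    ∃ δ > 0, ∀ x ∈ S, ∀ y ∈ S, dist y x ≤ δ → h y ≤ h x + ε := by
  obtain ⟨δ, hδ, hclose⟩ := Metric.uniformContinuousOn_iff_le.1
    (hS.uniformContinuousOn_of_continuous hh) ε hε
  exact ⟨δ, hδ, fun x hx y hy hyx =>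
    sub_le_iff_le_add'.1 ((le_abs_self _).trans (hclose y hy x hx hyx))⟩

lemma eventually_sub_le_add_mul_dist_sq {X : Type*} [PseudoMetricSpace X] {S : Set X}
    (hS : IsCompact S) {h : X → ℝ} (hh : ContinuousOn h S) {ε : ℝ} (hε : 0 < ε) :
    ∀ᶠ κ : ℝ in atTop, ∀ x ∈ S, ∀ y ∈ S, h y - h x ≤ ε + κ * dist y x ^ 2 := by
  obtain ⟨M, hM⟩ := hS.exists_bound_of_continuousOn hh
  obtain ⟨r, hr, hclose⟩ := exists_forall_dist_le_imp_le_add hS hh hε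
  filter_upwards [eventually_ge_atTop 0, eventually_ge_atTop (2 * M / r ^ 2)]
    with κ hκ₀ hκ x hx y hy
  rcases le_total (dist y x) r with hd | hd
  · have : 0 ≤ κ * dist y x ^ 2 := by positivity
    linarith [hclose x hx y hy hd]
  · have hy' := (abs_le.1 (hM y hy)).2
    have hx' := (abs_le.1 (hM x hx)).1
    calc h y - h x ≤ 2 * M := by linarith
      _ ≤ κ * r ^ 2 := (div_le_iff₀ (by positivity)).1 hκ
      _ ≤ κ * dist y x ^ 2 := by gcongr
      _ ≤ ε + κ * dist y x ^ 2 := le_add_of_nonneg_left hε.le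

lemma sub_le_mul_sub_of_hasDerivWithinAt_le {y y' : ℝ → ℝ} {a b C : ℝ} (hab : a ≤ b)
    (hy : ∀ t ∈ Icc a b, HasDerivWithinAt y (y' t) (Icc a b) t) (hC : ∀ t ∈ Ioo a b, y' t ≤ C) :
    y b - y a ≤ C * (b - a) := by
  rcases hab.eq_or_lt with rfl | hlt
  · simp
  obtain ⟨t, ht, hslope⟩ := exists_hasDerivAt_eq_slope y y' hlt
    (fun t ht => (hy t ht).continuousWithinAt) fun t ht =>
      (hy t (Ioo_subset_Icc_self ht)).hasDerivAt (Icc_mem_nhds ht.1 ht.2)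
  rw [← div_le_iff₀ (sub_pos.2 hlt), ← hslope]
  exact hC t ht

lemma exists_forall_le_add_mul_deriv_add {y y' : ℝ → ℝ} {a b : ℝ}
    (hy : ∀ t ∈ Icc a b, HasDerivWithinAt y (y' t) (Icc a b) t) (hy' : ContinuousOn y' (Icc a b))
    {η : ℝ} (hη : 0 < η) :
    ∃ δ > 0, ∀ s ∈ Icc a b, ∀ t ∈ Icc a b, s ≤ t → t ≤ s + δ →
      y t ≤ y s + (t - s) * (y' s + η) := by
  obtain ⟨δ, hδ, hclose⟩ := exists_forall_dist_le_imp_le_add isCompact_Icc hy' hη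
  refine ⟨δ, hδ, fun s hs t ht hst htδ => ?_⟩
  have hsub : Icc s t ⊆ Icc a b := Icc_subset_Icc hs.1 ht.2
  have hslope : y t - y s ≤ (y' s + η) * (t - s) := by
    refine sub_le_mul_sub_of_hasDerivWithinAt_le hst (fun r hr => (hy r (hsub hr)).mono hsub)
      fun r hr => ?_
    have hdist : dist r s ≤ δ := by
      rw [Real.dist_eq, abs_of_pos (sub_pos.2 hr.1)]
      linarith [hr.2]
    linarith [hclose s hs r (hsub (Ioo_subset_Icc_self hr)) hdist]
  linarith

lemma forall_mem_Icc_piecewise {X : Type*} {Q : ℝ → X → Prop} {a b c : ℝ} {ξ ξ' : ℝ → X}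
    (h : ∀ t ∈ Icc a b, Q t (ξ t)) (h' : ∀ t ∈ Icc b c, Q t (ξ' t)) :
    ∀ t ∈ Icc a c, Q t ((Iic b).piecewise ξ ξ' t) := by
  intro t ht
  rcases le_or_gt t b with htb | hbt
  · rw [piecewise_eq_of_mem _ _ _ (mem_Iic.2 htb)]
    exact h t ⟨ht.1, htb⟩
  · rw [piecewise_eq_of_notMem _ _ _ (notMem_Iic.2 hbt)]
    exact h' t ⟨hbt.le, ht.2⟩

lemma norm_le_two_mul_of_mem_closedBall {E V : Type*} [SeminormedAddCommGroup E] {f : E → V → E}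
    {U : Set V} {K : NNReal} {C τ : ℝ} {x z : E} {v : V} (hK : ∀ v ∈ U, LipschitzWith K (f · v))
    (hC : ∀ v ∈ U, ‖f x v‖ ≤ C) (hτ : τ * K ≤ 1 / 2) (hz : z ∈ Metric.closedBall x (2 * C * τ))
    (hv : v ∈ U) : ‖f z v‖ ≤ 2 * C := by
  have hCpos : 0 ≤ C := (norm_nonneg _).trans (hC v hv)
  calc ‖f z v‖ ≤ ‖f x v‖ + ‖f z v - f x v‖ := norm_le_norm_add_norm_sub' _ _
    _ ≤ C + K * (2 * C * τ) := add_le_add (hC v hv)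
        (((hK v hv).norm_sub_le z x).trans (by gcongr; exact mem_closedBall_iff_norm.1 hz))
    _ = C + τ * K * (2 * C) := by ring
    _ ≤ C + 1 / 2 * (2 * C) := by gcongr
    _ = 2 * C := by ring

section Trajectory

variable {E V : Type*} [NormedAddCommGroup E] [NormedSpace ℝ E]
  {f : E → V → E} {U : Set V} {K : NNReal} {a b c C σ : ℝ} {x : E}
  {u u' : ℝ → V} {ξ ξ' : ℝ → E}

/-- `ξ` is a trajectory of `f` on the time interval `[a, b]`, started from `x` at time `a`, under
the control signal `u`. Time is absolute, so that trajectories on adjacent intervals concatenate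
without a shift; outside `[a, b]` only the continuity of `ξ` is recorded. Integrability is part of
the notion because the Bochner integral of a non-integrable function is `0`. -/
structure IsTrajectoryOn (f : E → V → E) (a b : ℝ) (x : E) (u : ℝ → V) (ξ : ℝ → E) : Prop where
  continuous : Continuous ξ
  intervalIntegrable : IntervalIntegrable (fun t => f (ξ t) (u t)) volume a b
  eq_add_integral : ∀ t ∈ Icc a b, ξ t = x + ∫ s in a..t, f (ξ s) (u s)

lemma isTrajectoryOn_refl : IsTrajectoryOn f a a x u fun _ => x := by
  refine ⟨continuous_const, .refl, fun t ht => ?_⟩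
  rw [le_antisymm ht.2 ht.1, intervalIntegral.integral_same, add_zero]

namespace IsTrajectoryOn

lemma apply_left (h : IsTrajectoryOn f a b x u ξ) (hab : a ≤ b) : ξ a = x := by
  simpa using h.eq_add_integral a (left_mem_Icc.2 hab)

lemma sub_eq_integral (h : IsTrajectoryOn f a b x u ξ) {t : ℝ} (ht : t ∈ Icc a b) :
    ξ t - x = ∫ s in a..t, f (ξ s) (u s) :=
  sub_eq_of_eq_add' (h.eq_add_integral t ht)

lemma intervalIntegrable_left (h : IsTrajectoryOn f a b x u ξ) {t : ℝ} (ht : t ∈ Icc a b) :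
    IntervalIntegrable (fun t => f (ξ t) (u t)) volume a t :=
  h.intervalIntegrable.mono_set (uIcc_subset_uIcc_left (Icc_subset_uIcc ht))

lemma congr (h : IsTrajectoryOn f a b x u ξ) (hab : a ≤ b) (hξ' : Continuous ξ')
    (hξ : EqOn ξ' ξ (Icc a b)) (hu : EqOn u' u (Ioc a b)) : IsTrajectoryOn f a b x u' ξ' := by
  have heq : ∀ t ∈ Icc a b,
      EqOn (fun s => f (ξ' s) (u' s)) (fun s => f (ξ s) (u s)) (uIoc a t) := by
    intro t ht s hs
    rw [uIoc_of_le ht.1] at hs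
    have hs' : s ∈ Ioc a b := ⟨hs.1, hs.2.trans ht.2⟩
    simp only [hξ (Ioc_subset_Icc_self hs'), hu hs']
  refine ⟨hξ', h.intervalIntegrable.congr (heq b (right_mem_Icc.2 hab)).symm, fun t ht => ?_⟩
  rw [hξ ht, h.eq_add_integral t ht, intervalIntegral.integral_congr_ae (.of_forall (heq t ht))]

lemma trans (hab : IsTrajectoryOn f a b x u ξ) (hbc : IsTrajectoryOn f b c (ξ b) u ξ)
    (hle : a ≤ b) : IsTrajectoryOn f a c x u ξ := by
  refine ⟨hab.continuous, hab.intervalIntegrable.trans hbc.intervalIntegrable, fun t ht => ?_⟩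
  rcases le_total t b with htb | hbt
  · exact hab.eq_add_integral t ⟨ht.1, htb⟩
  have ht' : t ∈ Icc b c := ⟨hbt, ht.2⟩
  rw [hbc.eq_add_integral t ht', hab.eq_add_integral b (right_mem_Icc.2 hle), add_assoc,
    intervalIntegral.integral_add_adjacent_intervals hab.intervalIntegrable
      (hbc.intervalIntegrable_left ht')]

lemma concat (h : IsTrajectoryOn f a b x u ξ) (h' : IsTrajectoryOn f b c (ξ b) u' ξ')
    (hab : a ≤ b) (hbc : b ≤ c) :
    IsTrajectoryOn f a c x ((Iic b).piecewise u u') ((Iic b).piecewise ξ ξ') := by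
  have hcont : Continuous ((Iic b).piecewise ξ ξ') := by
    refine Continuous.piecewise (fun t ht => ?_) h.continuous h'.continuous
    obtain rfl : t = b := by simpa only [frontier_Iic, mem_singleton_iff] using ht
    exact (h'.apply_left hbc).symm
  have hright : EqOn ((Iic b).piecewise ξ ξ') ξ' (Icc b c) := by
    intro t ht
    rcases ht.1.eq_or_lt with rfl | hlt
    · rw [piecewise_eq_of_mem _ _ _ self_mem_Iic, h'.apply_left hbc]
    · exact piecewise_eq_of_notMem _ _ _ (not_le.2 hlt)
  refine trans (h.congr hab hcont ?_ ?_) ?_ hab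
  · exact fun t ht => piecewise_eq_of_mem _ _ _ ht.2
  · exact fun t ht => piecewise_eq_of_mem _ _ _ ht.2
  · rw [piecewise_eq_of_mem _ _ _ self_mem_Iic]
    exact h'.congr hbc hcont hright fun t ht => piecewise_eq_of_notMem _ _ _ (not_le.2 ht.1)

lemma norm_sub_le (h : IsTrajectoryOn f a b x u ξ) (hK : ∀ v ∈ U, LipschitzWith K (f · v))
    (hu : ∀ t ∈ Icc a b, u t ∈ U) (hC : ∀ v ∈ U, ‖f x v‖ ≤ C) (hb : (b - a) * K ≤ 1 / 2) :
    ∀ t ∈ Icc a b, ‖ξ t - x‖ ≤ 2 * C * (t - a) := by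
  intro t ht
  have hC₀ : 0 ≤ C := (norm_nonneg _).trans (hC _ (hu t ht))
  obtain ⟨s, hs, hmax⟩ := isCompact_Icc.exists_isMaxOn ⟨a, left_mem_Icc.2 ht.1⟩
    (h.continuous.sub continuous_const).norm.continuousOn (f := fun s => ‖ξ s - x‖)
  have hvel : ∀ r ∈ uIoc a s, ‖f (ξ r) (u r)‖ ≤ C + K * ‖ξ s - x‖ := by
    intro r hr
    rw [uIoc_of_le hs.1] at hr
    have hrt : r ∈ Icc a t := ⟨hr.1.le, hr.2.trans hs.2⟩
    have hur := hu r ⟨hrt.1, hrt.2.trans ht.2⟩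
    calc ‖f (ξ r) (u r)‖ ≤ ‖f x (u r)‖ + ‖f (ξ r) (u r) - f x (u r)‖ :=
          norm_le_norm_add_norm_sub' _ _
      _ ≤ C + K * ‖ξ r - x‖ := add_le_add (hC _ hur) ((hK _ hur).norm_sub_le _ _)
      _ ≤ C + K * ‖ξ s - x‖ := by gcongr; exact hmax hrt
  have hmaxle : ‖ξ s - x‖ ≤ C * (t - a) + 1 / 2 * ‖ξ s - x‖ := by
    calc ‖ξ s - x‖ ≤ (C + K * ‖ξ s - x‖) * |s - a| := by
          have hint := intervalIntegral.norm_integral_le_of_norm_le_const hvel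
          rwa [← h.sub_eq_integral ⟨hs.1, hs.2.trans ht.2⟩] at hint
      _ = C * (s - a) + (s - a) * K * ‖ξ s - x‖ := by rw [abs_of_nonneg (sub_nonneg.2 hs.1)]; ring
      _ ≤ C * (t - a) + (b - a) * K * ‖ξ s - x‖ := by gcongr; exacts [hs.2, hs.2.trans ht.2]
      _ ≤ C * (t - a) + 1 / 2 * ‖ξ s - x‖ := by gcongr
  have hst : ‖ξ t - x‖ ≤ ‖ξ s - x‖ := hmax (right_mem_Icc.2 ht.1)
  linarith

variable [CompleteSpace E]

lemma clm_sub_le (h : IsTrajectoryOn f a b x u ξ) (hK : ∀ v ∈ U, LipschitzWith K (f · v))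
    (hu : ∀ t ∈ Icc a b, u t ∈ U) (hC : ∀ v ∈ U, ‖f x v‖ ≤ C) (hb : (b - a) * K ≤ 1 / 2)
    (p : E →L[ℝ] ℝ) (hσ : ∀ v ∈ U, p (f x v) ≤ σ) :
    ∀ t ∈ Icc a b, p (ξ t - x) ≤ (t - a) * σ + 2 * C * K * ‖p‖ * (t - a) ^ 2 := by
  intro t ht
  have hC₀ : 0 ≤ C := (norm_nonneg _).trans (hC _ (hu t ht))
  have hvel : ∀ s ∈ Icc a t, p (f (ξ s) (u s)) ≤ σ + ‖p‖ * (K * (2 * C * (t - a))) := by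
    intro s hs
    have hsb : s ∈ Icc a b := ⟨hs.1, hs.2.trans ht.2⟩
    calc p (f (ξ s) (u s)) = p (f x (u s)) + p (f (ξ s) (u s) - f x (u s)) := by
          rw [map_sub]; ring
      _ ≤ σ + ‖p‖ * ‖f (ξ s) (u s) - f x (u s)‖ :=
          add_le_add (hσ _ (hu s hsb)) ((le_abs_self _).trans (p.le_opNorm _))
      _ ≤ σ + ‖p‖ * (K * ‖ξ s - x‖) := by gcongr; exact (hK _ (hu s hsb)).norm_sub_le _ _
      _ ≤ σ + ‖p‖ * (K * (2 * C * (s - a))) := by gcongr; exact h.norm_sub_le hK hu hC hb s hsb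
      _ ≤ σ + ‖p‖ * (K * (2 * C * (t - a))) := by gcongr; exact hs.2
  have hint := h.intervalIntegrable_left ht
  calc p (ξ t - x) = ∫ s in a..t, p (f (ξ s) (u s)) := by
        rw [h.sub_eq_integral ht, p.intervalIntegral_comp_comm hint]
    _ ≤ ∫ _ in a..t, (σ + ‖p‖ * (K * (2 * C * (t - a)))) :=
        intervalIntegral.integral_mono_on ht.1 ⟨p.integrable_comp hint.1, p.integrable_comp hint.2⟩
          intervalIntegrable_const hvel
    _ = (t - a) * σ + 2 * C * K * ‖p‖ * (t - a) ^ 2 := by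
        rw [intervalIntegral.integral_const, smul_eq_mul]; ring

end IsTrajectoryOn

variable [CompleteSpace E]

lemma exists_hasDerivWithinAt_of_lipschitzWith {g : E → E} (hg : LipschitzWith K g) (hab : a ≤ b)
    (hb : (b - a) * K ≤ 1 / 2) (x : E) :
    ∃ ζ : ℝ → E, ζ a = x ∧ ∀ t ∈ Icc a b, HasDerivWithinAt ζ (g (ζ t)) (Icc a b) t := by
  have hba : 0 ≤ b - a := sub_nonneg.2 hab
  let r : NNReal := ⟨2 * (b - a) * ‖g x‖, by positivity⟩
  have hbound : ∀ y ∈ Metric.closedBall x r, ‖g y‖ ≤ (2 * ‖g x‖₊ : NNReal) := by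
    intro y hy
    have hyr : ‖y - x‖ ≤ 2 * (b - a) * ‖g x‖ := mem_closedBall_iff_norm.1 hy
    calc ‖g y‖ ≤ ‖g x‖ + ‖g y - g x‖ := norm_le_norm_add_norm_sub' _ _
      _ ≤ ‖g x‖ + K * (2 * (b - a) * ‖g x‖) := by
          gcongr; exact (hg.norm_sub_le _ _).trans (by gcongr)
      _ = ‖g x‖ + (b - a) * K * (2 * ‖g x‖) := by ring
      _ ≤ ‖g x‖ + 1 / 2 * (2 * ‖g x‖) := by gcongr
      _ = 2 * ‖g x‖ := by ring
  have hPL : IsPicardLindelof (fun _ => g) (tmax := b) ⟨a, left_mem_Icc.2 hab⟩ x r 0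
      (2 * ‖g x‖₊) K := by
    refine .of_time_independent hbound hg.lipschitzOnWith (le_of_eq ?_)
    change 2 * ‖g x‖ * max (b - a) (a - a) = 2 * (b - a) * ‖g x‖ - 0
    rw [sub_self, max_eq_left hba]
    ring
  exact hPL.exists_eq_forall_mem_Icc_hasDerivWithinAt₀

lemma exists_isTrajectoryOn_const {v : V} (hf : LipschitzWith K (f · v)) (hab : a ≤ b)
    (hb : (b - a) * K ≤ 1 / 2) (x : E) : ∃ ξ, IsTrajectoryOn f a b x (fun _ => v) ξ := by
  obtain ⟨ζ, hζa, hζ⟩ := exists_hasDerivWithinAt_of_lipschitzWith hf hab hb x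
  have hζc : ContinuousOn ζ (Icc a b) := fun t ht => (hζ t ht).continuousWithinAt
  set ξ : ℝ → E := IccExtend hab ((Icc a b).domRestrict ζ)
  have hξc : Continuous ξ := (continuousOn_iff_continuous_domRestrict.1 hζc).Icc_extend'
  have hξζ : EqOn ξ ζ (Icc a b) := fun t ht => IccExtend_of_mem _ _ ht
  have hcont : Continuous fun t => f (ξ t) v := hf.continuous.comp hξc
  refine ⟨ξ, hξc, hcont.intervalIntegrable _ _, fun t ht => ?_⟩
  have hderiv : ∀ s ∈ Ioo a t, HasDerivAt ξ (f (ξ s) v) s := by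
    intro s hs
    have hs' : s ∈ Icc a b := ⟨hs.1.le, hs.2.le.trans ht.2⟩
    have hnhds : Icc a b ∈ 𝓝 s := Icc_mem_nhds hs.1 (hs.2.trans_le ht.2)
    rw [hξζ hs']
    exact ((hζ s hs').hasDerivAt hnhds).congr_of_eventuallyEq (hξζ.eventuallyEq_of_mem hnhds)
  rw [intervalIntegral.integral_eq_sub_of_hasDerivAt_of_le ht.1 hξc.continuousOn hderiv
    (hcont.intervalIntegrable _ _), hξζ (left_mem_Icc.2 hab), hζa, add_sub_cancel]

end Trajectory

section SupConvolution

variable {E : Type*} [NormedAddCommGroup E] [NormedSpace ℝ E]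

lemma exists_symm_bilin_sq_norm_le (E : Type*) [NormedAddCommGroup E] [NormedSpace ℝ E]
    [FiniteDimensional ℝ E] :
    ∃ B : E →L[ℝ] E →L[ℝ] ℝ, (∀ v w, B v w = B w v) ∧ ∀ w, ‖w‖ ^ 2 ≤ B w w := by
  let e : E →L[ℝ] EuclideanSpace ℝ (Fin (Module.finrank ℝ E)) := (toEuclidean (E := E))
  let e' : EuclideanSpace ℝ (Fin (Module.finrank ℝ E)) →L[ℝ] E := (toEuclidean (E := E)).symm
  have hB : ∀ v w, (‖e'‖ ^ 2 • (innerSL ℝ).bilinearComp e e) v w = ‖e'‖ ^ 2 * inner ℝ (e v) (e w) :=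
    fun v w => rfl
  refine ⟨‖e'‖ ^ 2 • (innerSL ℝ).bilinearComp e e,
    fun v w => by rw [hB, hB, real_inner_comm], fun w => ?_⟩
  have hw : ‖w‖ ≤ ‖e'‖ * ‖e w‖ := by
    simpa [e, e'] using e'.le_opNorm (e w)
  calc ‖w‖ ^ 2 ≤ (‖e'‖ * ‖e w‖) ^ 2 := by gcongr
    _ = _ := by rw [hB, real_inner_self_eq_norm_sq, mul_pow]

/-- The sup-convolution of `h` over `S` with quadratic penalty `κ * B (y - x) (y - x)`: a
semiconvex approximation of `h` from above. A quadratic form `B` replaces the squared norm so that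
the penalty is smooth for any norm on `E`. The supremum is meaningful when `h` is bounded above
on `S`. -/
def supConvolution (B : E →L[ℝ] E →L[ℝ] ℝ) (κ : ℝ) (S : Set E) (h : E → ℝ) (x : E) : ℝ :=
  sSup ((fun y => h y - κ * B (y - x) (y - x)) '' S)

variable {B : E →L[ℝ] E →L[ℝ] ℝ} {κ ε : ℝ} {S : Set E} {h : E → ℝ} {x y : E}

lemma continuousOn_sub_penalty (hh : ContinuousOn h S) :
    ContinuousOn (fun y => h y - κ * B (y - x) (y - x)) S := by
  fun_prop

lemma sub_penalty_le_supConvolution (hS : IsCompact S) (hh : ContinuousOn h S) (hy : y ∈ S) :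
    h y - κ * B (y - x) (y - x) ≤ supConvolution B κ S h x :=
  le_csSup (hS.image_of_continuousOn (continuousOn_sub_penalty hh)).bddAbove
    (mem_image_of_mem _ hy)

lemma exists_isMaxOn_supConvolution_eq (hS : IsCompact S) (hne : S.Nonempty)
    (hh : ContinuousOn h S) (x : E) :
    ∃ y ∈ S, supConvolution B κ S h x = h y - κ * B (y - x) (y - x) ∧
      IsMaxOn (fun y => h y - κ * B (y - x) (y - x)) S y :=
  hS.exists_sSup_image_eq_and_ge hne (continuousOn_sub_penalty hh)

lemma le_supConvolution_add (hS : IsCompact S) (hh : ContinuousOn h S)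
    (hB : ∀ v w, B v w = B w v) (hy : y ∈ S)
    (hyx : supConvolution B κ S h x = h y - κ * B (y - x) (y - x)) (w : E) :
    supConvolution B κ S h x + 2 * κ * B (y - x) w - κ * B w w ≤
      supConvolution B κ S h (x + w) := by
  refine le_trans (le_of_eq ?_) (sub_penalty_le_supConvolution hS hh hy)
  rw [hyx, ← sub_sub]
  generalize y - x = v
  simp only [map_sub, sub_apply, hB w]
  ring

lemma hasFDerivAt_penalty (hB : ∀ v w, B v w = B w v) (κ : ℝ) (x y : E) :
    HasFDerivAt (fun z => κ * B (z - x) (z - x)) ((2 * κ) • B (y - x)) y := by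
  have hsub : HasFDerivAt (fun z : E => z - x) (ContinuousLinearMap.id ℝ E) y :=
    (hasFDerivAt_id y).sub_const x
  refine ((B.hasFDerivAt_of_bilinear hsub hsub).const_mul κ).congr_fderiv ?_
  ext w
  simp [hB w]
  ring

lemma norm_lt_one_of_penalty_le {w : E} (hB : ∀ w, ‖w‖ ^ 2 ≤ B w w) (hε : 0 ≤ ε) (hκ : ε < κ)
    (hw : κ * B w w ≤ ε) : ‖w‖ < 1 := by
  by_contra! hge
  have hκ₀ : 0 ≤ κ := hε.trans hκ.le
  have : κ * 1 ≤ κ * B w w := by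
    gcongr
    exact (one_le_pow₀ hge).trans (hB w)
  linarith

lemma supConvolution_maximizer_bounds (hS : IsCompact S) (hh : ContinuousOn h S)
    (hB : ∀ w, ‖w‖ ^ 2 ≤ B w w) (hκ : 0 ≤ κ)
    (hmod : ∀ x ∈ S, ∀ y ∈ S, h y - h x ≤ ε + κ * dist y x ^ 2) (hx : x ∈ S) (hy : y ∈ S)
    (hyx : supConvolution B (2 * κ) S h x = h y - 2 * κ * B (y - x) (y - x)) :
    h x ≤ supConvolution B (2 * κ) S h x ∧ supConvolution B (2 * κ) S h x ≤ h x + ε ∧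
      0 ≤ κ * B (y - x) (y - x) ∧ κ * B (y - x) (y - x) ≤ ε := by
  have hle : h x ≤ supConvolution B (2 * κ) S h x := by
    simpa using sub_penalty_le_supConvolution (B := B) (κ := 2 * κ) (x := x) hS hh hx
  have hxy := hmod x hx y hy
  have hsq : κ * dist y x ^ 2 ≤ κ * B (y - x) (y - x) := by
    rw [dist_eq_norm]
    gcongr
    exact hB _
  have hpos : 0 ≤ κ * B (y - x) (y - x) := mul_nonneg hκ ((sq_nonneg _).trans (hB _))
  exact ⟨hle, by linarith, hpos, by linarith⟩

end SupConvolution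

section Proximal

variable {E V : Type*} [NormedAddCommGroup E] [NormedSpace ℝ E]

/-- `g` is a proximal control barrier function on `D` with rate `γ`: wherever `g` is positive on
`D`, some control satisfies the barrier inequality along some proximal subgradient of `g`. The
constant `c` bounds both the subgradients and the quadratic defect. -/
def IsProximalCBFOn (f : E → V → E) (U : Set V) (γ : ℝ → ℝ) (c : ℝ) (D : Set E) (g : E → ℝ) :
    Prop :=
  ∀ x ∈ D, 0 < g x → ∃ v ∈ U, ∃ p : E →L[ℝ] ℝ, ‖p‖ ≤ c ∧
    (∀ w, g x + p w - c * ‖w‖ ^ 2 ≤ g (x + w)) ∧ -γ (g x) ≤ p (f x v)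

variable {B : E →L[ℝ] E →L[ℝ] ℝ} {κ ε r : ℝ} {S : Set E} {h : E → ℝ} {x y : E} {f : E → V → E}
  {v : V} {K : NNReal}

lemma exists_proximal_subgradient_supConvolution (hS : IsCompact S) (hh : ContinuousOn h S)
    (hBsymm : ∀ v w, B v w = B w v) (hB : ∀ w, ‖w‖ ^ 2 ≤ B w w) (hκ : 0 ≤ κ)
    (hf : LipschitzWith K (f · v)) (hy : y ∈ S)
    (hyx : supConvolution B (2 * κ) S h x = h y - 2 * κ * B (y - x) (y - x))
    (hdist : ‖y - x‖ ≤ 1) (hpen : κ * B (y - x) (y - x) ≤ ε)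
    (hv : -r ≤ 2 * (2 * κ) * B (y - x) (f y v)) :
    ∃ p : E →L[ℝ] ℝ, ‖p‖ ≤ 4 * κ * ‖B‖ ∧
      (∀ w, supConvolution B (2 * κ) S h x + p w - 4 * κ * ‖B‖ * ‖w‖ ^ 2 ≤
        supConvolution B (2 * κ) S h (x + w)) ∧
      -(r + 4 * ‖B‖ * K * ε) ≤ p (f x v) := by
  have hnorm : ‖(4 * κ) • B (y - x)‖ ≤ 4 * κ * ‖B‖ * ‖y - x‖ := by
    rw [norm_smul, Real.norm_of_nonneg (by positivity), mul_assoc (4 * κ)]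
    gcongr
    exact B.le_opNorm _
  refine ⟨(4 * κ) • B (y - x), hnorm.trans (mul_le_of_le_one_right (by positivity) hdist),
    fun w => ?_, ?_⟩
  · have hBw : 2 * κ * B w w ≤ 4 * κ * ‖B‖ * ‖w‖ ^ 2 := by
      calc 2 * κ * B w w ≤ 2 * κ * (‖B‖ * ‖w‖ * ‖w‖) := by
            gcongr; exact (le_abs_self _).trans (B.le_opNorm₂ w w)
        _ ≤ 4 * κ * (‖B‖ * ‖w‖ * ‖w‖) := by gcongr; norm_num
        _ = 4 * κ * ‖B‖ * ‖w‖ ^ 2 := by ring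
    have hsemi := le_supConvolution_add hS hh hBsymm hy hyx w
    simp only [smul_apply, smul_eq_mul]
    linarith
  · have hsq : κ * ‖y - x‖ ^ 2 ≤ ε := (mul_le_mul_of_nonneg_left (hB _) hκ).trans hpen
    have hchange : ((4 * κ) • B (y - x)) (f y v - f x v) ≤ 4 * ‖B‖ * K * ε := by
      calc ((4 * κ) • B (y - x)) (f y v - f x v)
          ≤ ‖(4 * κ) • B (y - x)‖ * ‖f y v - f x v‖ :=
            (le_abs_self _).trans (((4 * κ) • B (y - x)).le_opNorm _)
        _ ≤ 4 * κ * ‖B‖ * ‖y - x‖ * (K * ‖y - x‖) := by gcongr; exact hf.norm_sub_le _ _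
        _ = 4 * ‖B‖ * K * (κ * ‖y - x‖ ^ 2) := by ring
        _ ≤ 4 * ‖B‖ * K * ε := by gcongr
    rw [map_sub] at hchange
    simp only [smul_apply, smul_eq_mul] at hchange ⊢
    linarith

end Proximal

section Viscosity

variable {n m : ℕ} {f : (Fin n → ℝ) → (Fin m → ℝ) → Fin n → ℝ} {U : Set (Fin m → ℝ)}
  {α : ℝ → ℝ} {h : (Fin n → ℝ) → ℝ} {K : NNReal}

lemma IsViscosityCBF.exists_neg_le_fderiv (hV : IsViscosityCBF f U α h) (hU : IsCompact U)
    (hUne : U.Nonempty) {y : Fin n → ℝ} (hfy : ContinuousOn (f y) U) (hy : 0 < h y)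
    {φ : (Fin n → ℝ) → ℝ} (hφ : ContDiff ℝ 1 φ) (hmax : IsLocalMax (fun z => h z - φ z) y) :
    ∃ v ∈ U, -α (h y) ≤ fderiv ℝ φ y (f y v) := by
  obtain ⟨v, hv, hsup, -⟩ := hU.exists_sSup_image_eq_and_ge hUne
    ((fderiv ℝ φ y).continuous.comp_continuousOn hfy)
  exact ⟨v, hv, (hV.2 y hy φ hφ hmax).trans_eq hsup⟩

lemma IsViscosityCBF.exists_isProximalCBFOn (hV : IsViscosityCBF f U α h) (hU : IsCompact U)
    (hUne : U.Nonempty) (hf : ∀ x, ContinuousOn (f x) U) (hK : ∀ v ∈ U, LipschitzWith K (f · v))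
    (hα : ContinuousOn α (Ici 0)) {η : ℝ} (hη : 0 < η) (x₀ : Fin n → ℝ) (ρ : ℝ) :
    ∃ g c, (∀ x ∈ Metric.closedBall x₀ ρ, h x ≤ g x ∧ g x ≤ h x + η) ∧
      IsProximalCBFOn f U (fun r => α r + η) c (Metric.closedBall x₀ ρ) g := by
  obtain ⟨B, hBsymm, hB⟩ := exists_symm_bilin_sq_norm_le (Fin n → ℝ)
  set S := Metric.closedBall x₀ (ρ + 1)
  have hS : IsCompact S := isCompact_closedBall _ _
  have hDS : Metric.closedBall x₀ ρ ⊆ S := Metric.closedBall_subset_closedBall (by linarith)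
  have hh : ContinuousOn h S := hV.1.continuousOn
  obtain ⟨M, hM⟩ := hS.bddAbove_image hh
  obtain ⟨δ, hδ, hαδ⟩ := exists_forall_dist_le_imp_le_add (isCompact_Icc (a := 0) (b := M))
    (hα.mono Icc_subset_Ici_self) (half_pos hη)
  obtain ⟨ε, hε, hsmall⟩ := exists_pos_mul_lt (lt_min (half_pos hη) hδ) (2 + 4 * ‖B‖ * K)
  obtain ⟨κ, hmod, hεκ⟩ := ((eventually_sub_le_add_mul_dist_sq hS hh hε).and
    (eventually_gt_atTop ε)).exists
  have hκ : 0 ≤ κ := (hε.trans hεκ).le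
  have herror : 0 ≤ 4 * ‖B‖ * K * ε := by positivity
  have hsmallη := hsmall.trans_le (min_le_left _ _)
  have hsmallδ := hsmall.trans_le (min_le_right _ _)
  refine ⟨supConvolution B (2 * κ) S h, 4 * κ * ‖B‖, fun x hx => ?_, fun x hx hgx => ?_⟩ <;>
    obtain ⟨y, hy, hyx, hmax⟩ :=
      exists_isMaxOn_supConvolution_eq (B := B) (κ := 2 * κ) hS ⟨x, hDS hx⟩ hh x <;>
    obtain ⟨hle, hge, hpen₀, hpen⟩ :=
      supConvolution_maximizer_bounds hS hh hB hκ hmod (hDS hx) hy hyx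
  · exact ⟨hle, by linarith⟩
  · have hdist : ‖y - x‖ < 1 := norm_lt_one_of_penalty_le hB hε.le hεκ hpen
    have hlocal : IsLocalMax (fun z => h z - 2 * κ * B (z - x) (z - x)) y := by
      refine hmax.isLocalMax (Metric.closedBall_mem_nhds_of_mem (Metric.mem_ball.2 ?_))
      linarith [dist_triangle y x x₀, dist_eq_norm y x, Metric.mem_closedBall.1 hx]
    have hhy : 0 < h y := by linarith
    have hhyM : h y ≤ M := hM (mem_image_of_mem h hy)
    obtain ⟨v, hv, hvy⟩ := hV.exists_neg_le_fderiv hU hUne (hf y) hhy (by fun_prop) hlocal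
    rw [(hasFDerivAt_penalty hBsymm _ x y).fderiv] at hvy
    obtain ⟨p, hp, hsemi, hpv⟩ := exists_proximal_subgradient_supConvolution hS hh hBsymm hB hκ
      (hK v hv) hy hyx hdist.le hpen hvy
    have hαy : α (h y) ≤ α (supConvolution B (2 * κ) S h x) + η / 2 :=
      hαδ _ ⟨hgx.le, by linarith⟩ _ ⟨hhy.le, hhyM⟩
        (by rw [Real.dist_eq, abs_of_nonneg] <;> linarith)
    exact ⟨v, hv, p, hp, hsemi, by linarith⟩

end Viscosity

section SampleAndHold

variable {m : ℕ} {E : Type*} [NormedAddCommGroup E] [NormedSpace ℝ E]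
  {f : E → (Fin m → ℝ) → E} {U : Set (Fin m → ℝ)} {K : NNReal} {a b C : ℝ} {x : E}

lemma isControl_const {v : Fin m → ℝ} (hv : v ∈ U) : IsControl U fun _ => v :=
  ⟨measurable_const, fun _ _ => hv⟩

lemma IsControl.piecewise {u u' : ℝ → Fin m → ℝ} (hu : IsControl U u) (hu' : IsControl U u')
    (b : ℝ) : IsControl U ((Iic b).piecewise u u') := by
  refine ⟨hu.1.piecewise measurableSet_Iic hu'.1, fun t ht => ?_⟩
  unfold Set.piecewise
  split_ifs
  exacts [hu.2 t ht, hu'.2 t ht]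

lemma exists_isTrajectoryOn_of_forall_step (hUne : U.Nonempty)
    (hK : ∀ v ∈ U, LipschitzWith K (f · v)) (hC : ∀ v ∈ U, ‖f x v‖ ≤ C) (ha : 0 ≤ a) (hab : a ≤ b)
    (hb : (b - a) * K ≤ 1 / 2) {Q : ℝ → E → Prop} (hQ : Q a x) {δ : ℝ} (hδ : 0 < δ)
    (hstep : ∀ s t, a ≤ s → s ≤ t → t ≤ b → t ≤ s + δ →
      ∀ z ∈ Metric.closedBall x (2 * C * (b - a)), Q s z →
        ∃ v ∈ U, ∃ ζ, IsTrajectoryOn f s t z (fun _ => v) ζ ∧ ∀ r ∈ Icc s t, Q r (ζ r)) :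
    ∃ u ξ, IsControl U u ∧ IsTrajectoryOn f a b x u ξ ∧ ∀ t ∈ Icc a b, Q t (ξ t) := by
  obtain ⟨v₀, hv₀⟩ := hUne
  have hC₀ : 0 ≤ C := (norm_nonneg _).trans (hC v₀ hv₀)
  refine forall_mem_Icc_of_forall_step
    (P := fun T => ∃ u ξ, IsControl U u ∧ IsTrajectoryOn f a T x u ξ ∧ ∀ t ∈ Icc a T, Q t (ξ t))
    hδ ⟨fun _ => v₀, fun _ => x, isControl_const hv₀, isTrajectoryOn_refl, fun t ht => ?_⟩ ?_
    b (right_mem_Icc.2 hab)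
  · rwa [le_antisymm ht.2 ht.1]
  rintro s hs ⟨u, ξ, hu, hξ, hQξ⟩ t ht htb
  have hsb : (s - a) * K ≤ 1 / 2 := hb.trans' (by gcongr; exact hs.2)
  have hball : ξ s ∈ Metric.closedBall x (2 * C * (b - a)) := by
    rw [mem_closedBall_iff_norm]
    calc ‖ξ s - x‖ ≤ 2 * C * (s - a) := hξ.norm_sub_le hK (fun r hr => hu.2 r (ha.trans hr.1)) hC
          hsb s (right_mem_Icc.2 hs.1)
      _ ≤ 2 * C * (b - a) := by gcongr; exact hs.2
  obtain ⟨v, hv, ζ, hζ, hQζ⟩ :=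
    hstep s t hs.1 ht.1 htb ht.2 (ξ s) hball (hQξ s (right_mem_Icc.2 hs.1))
  refine ⟨_, _, hu.piecewise (isControl_const hv) s, hξ.concat hζ hs.1 ht.1,
    forall_mem_Icc_piecewise hQξ hQζ⟩

variable [CompleteSpace E] {γ : ℝ → ℝ} {c : ℝ} {D : Set E} {g : E → ℝ}

lemma IsProximalCBFOn.exists_step (hg : IsProximalCBFOn f U γ c D g)
    (hK : ∀ v ∈ U, LipschitzWith K (f · v)) (hx : x ∈ D) (hgx : 0 < g x)
    (hC : ∀ v ∈ U, ‖f x v‖ ≤ C) (hab : a ≤ b) (hb : (b - a) * K ≤ 1 / 2) :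
    ∃ v ∈ U, ∃ ζ, IsTrajectoryOn f a b x (fun _ => v) ζ ∧ ∀ t ∈ Icc a b,
      g x - (t - a) * γ (g x) - c * (2 * C * K + 4 * C ^ 2) * (t - a) ^ 2 ≤ g (ζ t) := by
  obtain ⟨v, hv, p, hp, hsemi, hpv⟩ := hg x hx hgx
  obtain ⟨ζ, hζ⟩ := exists_isTrajectoryOn_const (hK v hv) hab hb x
  refine ⟨v, hv, ζ, hζ, fun t ht => ?_⟩
  have hC₀ : 0 ≤ C := (norm_nonneg _).trans (hC v hv)
  have hc : 0 ≤ c := (norm_nonneg _).trans hp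
  have hsub : ∀ w ∈ ({v} : Set (Fin m → ℝ)), w ∈ U := by simpa using hv
  have hK' : ∀ w ∈ ({v} : Set (Fin m → ℝ)), LipschitzWith K (f · w) := fun w hw => hK w (hsub w hw)
  have hC' : ∀ w ∈ ({v} : Set (Fin m → ℝ)), ‖f x w‖ ≤ C := fun w hw => hC w (hsub w hw)
  have hnorm := hζ.norm_sub_le hK' (fun _ _ => mem_singleton v) hC' hb t ht
  have hlin := hζ.clm_sub_le hK' (fun _ _ => mem_singleton v) hC' hb (-p) (σ := γ (g x))
    (by simpa using neg_le.1 hpv) t ht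
  rw [neg_apply, norm_neg] at hlin
  have hp' : 2 * C * K * ‖p‖ * (t - a) ^ 2 ≤ 2 * C * K * c * (t - a) ^ 2 := by gcongr
  have hquad : c * ‖ζ t - x‖ ^ 2 ≤ c * (2 * C * (t - a)) ^ 2 := by gcongr
  have hw := hsemi (ζ t - x)
  rw [add_sub_cancel] at hw
  linarith

-- The shift `3 * η` absorbs the errors `η * σ` of `g'`, of `y'` and of the quadratic defect.
lemma exp_mul_add_le_of_euler_step {L η σ g g' y y' αg αy c : ℝ} (hL : 1 ≤ L) (hη : 0 ≤ η)
    (hσ : 0 ≤ σ) (hσL : σ * L ≤ 1 / 2) (hcσ : c * σ ≤ η) (hyg : y ≤ g)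
    (hα : αg - αy ≤ L * (g - y)) (hg' : g - σ * (αg + η) - c * σ ^ 2 ≤ g')
    (hy' : y' ≤ y + σ * (-αy + η)) :
    Real.exp (-(2 * (σ * L))) * (g - y + 3 * η) ≤ g' - y' + 3 * η := by
  have hpos : 0 ≤ g - y + 3 * η := by linarith
  calc Real.exp (-(2 * (σ * L))) * (g - y + 3 * η)
      ≤ (1 - σ * L) * (g - y + 3 * η) :=
        mul_le_mul_of_nonneg_right (exp_neg_two_mul_le_one_sub (by positivity) hσL) hpos
    _ ≤ g - y + 3 * η - σ * (L * (g - y)) - 3 * (σ * η) := by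
        nlinarith [mul_nonneg (mul_nonneg hσ hη) (sub_nonneg.2 hL)]
    _ ≤ g' - y' + 3 * η := by
        nlinarith [mul_le_mul_of_nonneg_left hα hσ, mul_le_mul_of_nonneg_left hcσ hσ]

lemma IsProximalCBFOn.exists_step_gap {α y : ℝ → ℝ} {η M : ℝ} {L : NNReal}
    (hg : IsProximalCBFOn f U (fun r => α r + η) c D g) (hK : ∀ v ∈ U, LipschitzWith K (f · v))
    (hx : x ∈ D) (hgM : g x ≤ M) (hC : ∀ v ∈ U, ‖f x v‖ ≤ C) (hab : a ≤ b)
    (hb : (b - a) * K ≤ 1 / 2) (hα : LipschitzOnWith L α (Icc 0 M)) (hL : 1 ≤ (L : ℝ))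
    (hη : 0 ≤ η) (hy₀ : 0 ≤ y a) (hyg : y a < g x)
    (hy : ∀ t ∈ Icc a b, y t ≤ y a + (t - a) * (-α (y a) + η)) (hbL : L * (b - a) ≤ 1 / 2)
    (hbc : |c * (2 * C * K + 4 * C ^ 2)| * (b - a) ≤ η) :
    ∃ v ∈ U, ∃ ζ, IsTrajectoryOn f a b x (fun _ => v) ζ ∧ ∀ t ∈ Icc a b,
      Real.exp (-(2 * ((t - a) * L))) * (g x - y a + 3 * η) ≤ g (ζ t) - y t + 3 * η := by
  obtain ⟨v, hv, ζ, hζ, hζg⟩ := hg.exists_step hK hx (hy₀.trans_lt hyg) hC hab hb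
  refine ⟨v, hv, ζ, hζ, fun t ht => ?_⟩
  have hαL : α (g x) - α (y a) ≤ L * (g x - y a) := by
    have := hα.norm_sub_le ⟨hy₀.trans hyg.le, hgM⟩ ⟨hy₀, hyg.le.trans hgM⟩
    rw [Real.norm_of_nonneg (sub_nonneg.2 hyg.le)] at this
    exact (le_abs_self _).trans this
  have htL : (t - a) * L ≤ 1 / 2 := hbL.trans' (by rw [mul_comm]; gcongr; exact ht.2)
  have htc : c * (2 * C * K + 4 * C ^ 2) * (t - a) ≤ η :=
    hbc.trans' (mul_le_mul (le_abs_self _) (by linarith [ht.2]) (by linarith [ht.1])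
      (abs_nonneg _))
  exact exp_mul_add_le_of_euler_step hL hη (sub_nonneg.2 ht.1) htL htc hyg.le hαL (hζg t ht)
    (hy t ht)

lemma IsProximalCBFOn.exists_isTrajectoryOn_gap {α y : ℝ → ℝ} {η M : ℝ} {L : NNReal}
    (hg : IsProximalCBFOn f U (fun r => α r + η) c (Metric.closedBall x (2 * C * (b - a))) g)
    (hgM : ∀ z ∈ Metric.closedBall x (2 * C * (b - a)), g z ≤ M) (hUne : U.Nonempty)
    (hK : ∀ v ∈ U, LipschitzWith K (f · v)) (hC : ∀ v ∈ U, ‖f x v‖ ≤ C) (ha : 0 ≤ a) (hab : a ≤ b)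
    (hb : (b - a) * K ≤ 1 / 2) (hα : LipschitzOnWith L α (Icc 0 M)) (hL : 1 ≤ (L : ℝ))
    (hy : ∀ t ∈ Icc a b, HasDerivWithinAt y (-α (y t)) (Icc a b) t)
    (hyM : MapsTo y (Icc a b) (Icc 0 M)) (hη : 0 < η)
    (hmargin : 3 * η < Real.exp (-(2 * ((b - a) * L))) * (g x - y a + 3 * η)) :
    ∃ u ξ, IsControl U u ∧ IsTrajectoryOn f a b x u ξ ∧ ∀ t ∈ Icc a b,
      Real.exp (-(2 * ((t - a) * L))) * (g x - y a + 3 * η) ≤ g (ξ t) - y t + 3 * η := by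
  have hG : 0 ≤ g x - y a + 3 * η :=
    (pos_of_mul_pos_right ((by positivity : (0 : ℝ) < 3 * η).trans hmargin)
      (Real.exp_pos _).le).le
  obtain ⟨δ₁, hδ₁, hyδ⟩ := exists_forall_le_add_mul_deriv_add hy
    (hα.continuousOn.comp (fun t ht => (hy t ht).continuousWithinAt) hyM).neg hη
  obtain ⟨δ₂, hδ₂, hLδ⟩ := exists_pos_mul_lt (half_pos one_pos) (L : ℝ)
  obtain ⟨δ₃, hδ₃, hcδ⟩ := exists_pos_mul_lt hη |c * (2 * (2 * C) * K + 4 * (2 * C) ^ 2)|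
  refine exists_isTrajectoryOn_of_forall_step hUne hK hC ha hab hb
    (Q := fun t z => Real.exp (-(2 * ((t - a) * L))) * (g x - y a + 3 * η) ≤ g z - y t + 3 * η)
    (by simp) (lt_min (lt_min hδ₁ hδ₂) hδ₃) fun s t has hst htb htδ z hz hQz => ?_
  simp only [← sub_le_iff_le_add', le_min_iff] at htδ
  have hsI : s ∈ Icc a b := ⟨has, hst.trans htb⟩
  have hyg : y s < g z := by
    have hexp : Real.exp (-(2 * ((b - a) * L))) ≤ Real.exp (-(2 * ((s - a) * L))) := by
      gcongr; exact hsI.2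
    linarith [mul_le_mul_of_nonneg_right hexp hG]
  obtain ⟨v, hv, ζ, hζ, hgap⟩ := hg.exists_step_gap hK hz (hgM z hz)
    (fun v hv => norm_le_two_mul_of_mem_closedBall hK hC hb hz hv) hst
    (hb.trans' (by gcongr)) hα hL hη.le (hyM hsI).1 hyg
    (fun r hr => hyδ s hsI r ⟨has.trans hr.1, hr.2.trans htb⟩ hr.1 (by linarith [hr.2]))
    (hLδ.le.trans' (by gcongr; exact htδ.1.2)) (hcδ.le.trans' (by gcongr; exact htδ.2))
  refine ⟨v, hv, ζ, hζ, fun r hr => ?_⟩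
  calc Real.exp (-(2 * ((r - a) * L))) * (g x - y a + 3 * η)
      = Real.exp (-(2 * ((r - s) * L))) *
          (Real.exp (-(2 * ((s - a) * L))) * (g x - y a + 3 * η)) := by
        rw [← mul_assoc (Real.exp _), ← Real.exp_add]; congr 2; ring
    _ ≤ Real.exp (-(2 * ((r - s) * L))) * (g z - y s + 3 * η) := by gcongr
    _ ≤ g (ζ r) - y r + 3 * η := hgap r hr

end SampleAndHold

section FiniteHorizon

variable {n m : ℕ} {f : (Fin n → ℝ) → (Fin m → ℝ) → Fin n → ℝ} {U : Set (Fin m → ℝ)}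
  {α : ℝ → ℝ} {h : (Fin n → ℝ) → ℝ} {K : NNReal}

lemma IsViscosityCBF.exists_isTrajectoryOn_lt (hV : IsViscosityCBF f U α h) (hU : IsCompact U)
    (hUne : U.Nonempty) (hf : ∀ x, ContinuousOn (f x) U) (hK : ∀ v ∈ U, LipschitzWith K (f · v))
    (hα : LocallyLipschitzOn (Ici 0) α) {a b : ℝ} (ha : 0 ≤ a) (hab : a ≤ b)
    (hb : (b - a) * K ≤ 1 / 2) {y : ℝ → ℝ}
    (hy : ∀ t ∈ Icc a b, HasDerivWithinAt y (-α (y t)) (Icc a b) t) (hy₀ : ∀ t ∈ Icc a b, 0 ≤ y t)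
    {x : Fin n → ℝ} (hyx : y a < h x) :
    ∃ u ξ, IsControl U u ∧ IsTrajectoryOn f a b x u ξ ∧ ∀ t ∈ Icc a b, y t < h (ξ t) := by
  obtain ⟨C, hC⟩ := hU.exists_bound_of_continuousOn (hf x)
  set D := Metric.closedBall x (2 * C * (b - a))
  obtain ⟨N, hN⟩ := (isCompact_closedBall x (2 * C * (b - a))).bddAbove_image hV.1.continuousOn
  obtain ⟨N', hN'⟩ := isCompact_Icc.bddAbove_image fun t ht => (hy t ht).continuousWithinAt
  set M := max (N + 1) N'
  obtain ⟨L₀, hL₀⟩ := (hα.mono Icc_subset_Ici_self).exists_lipschitzOnWith_of_compact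
    (isCompact_Icc (a := 0) (b := M))
  set L := max L₀ 1
  obtain ⟨η', hη', hηd⟩ := exists_pos_mul_lt
    (mul_pos (Real.exp_pos (-(2 * ((b - a) * L)))) (sub_pos.2 hyx)) 4
  set η := min η' 1
  have hη : 0 < η := lt_min hη' one_pos
  obtain ⟨g, c, hgh, hg⟩ :=
    hV.exists_isProximalCBFOn hU hUne hf hK hα.continuousOn hη x (2 * C * (b - a))
  have hgM : ∀ z ∈ D, g z ≤ M := fun z hz => le_max_of_le_left
    (by linarith [(hgh z hz).2, hN (mem_image_of_mem h hz), min_le_right η' 1])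
  have hyM : MapsTo y (Icc a b) (Icc 0 M) := fun t ht =>
    ⟨hy₀ t ht, le_max_of_le_right (hN' (mem_image_of_mem y ht))⟩
  have hCpos : 0 ≤ C := hUne.elim fun v hv => (norm_nonneg _).trans (hC v hv)
  have hxg : h x ≤ g x := (hgh x (Metric.mem_closedBall_self (by
    have := sub_nonneg.2 hab; positivity))).1
  have hmargin : ∀ t ∈ Icc a b,
      4 * η < Real.exp (-(2 * ((t - a) * L))) * (g x - y a + 3 * η) := by
    intro t ht
    calc 4 * η ≤ 4 * η' := by gcongr; exact min_le_left _ _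
      _ < Real.exp (-(2 * ((b - a) * L))) * (h x - y a) := hηd
      _ ≤ Real.exp (-(2 * ((t - a) * L))) * (g x - y a + 3 * η) := by
        gcongr
        exacts [ht.2, by linarith]
  obtain ⟨u, ξ, hu, hξ, hgap⟩ := hg.exists_isTrajectoryOn_gap hgM hUne hK hC ha hab hb
    (hL₀.weaken (le_max_left _ _)) (NNReal.coe_le_coe.2 (le_max_right L₀ 1)) hy hyM hη
    (by linarith [hmargin b (right_mem_Icc.2 hab)])
  refine ⟨u, ξ, hu, hξ, fun t ht => ?_⟩
  have hξD : ξ t ∈ D := mem_closedBall_iff_norm.2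
    ((hξ.norm_sub_le hK (fun s hs => hu.2 s (ha.trans hs.1)) hC hb t ht).trans
      (by gcongr; exact ht.2))
  linarith [hgap t ht, hmargin t ht, (hgh _ hξD).2]

end FiniteHorizon

section Gluing

lemma exists_eqOn_of_forall_extend {X : Type*} {P : ℕ → (ℝ → X) → Prop} {τ : ℝ} (hτ : 0 < τ)
    (h₀ : ∃ w, P 0 w)
    (hstep : ∀ k w, P k w → ∃ w', P (k + 1) w' ∧ EqOn w' w (Iic (k * τ))) :
    ∃ w, ∀ k, ∃ w', P k w' ∧ EqOn w w' (Iic (k * τ)) := by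
  obtain ⟨w₀, hw₀⟩ := h₀
  choose! next hP heq using hstep
  let chain : ℕ → ℝ → X := fun k => Nat.rec w₀ next k
  have hchain : ∀ k, P k (chain k) := fun k => Nat.rec hw₀ (fun k hk => hP k (chain k) hk) k
  have hmono : ∀ j k, j ≤ k → EqOn (chain k) (chain j) (Iic (j * τ)) := by
    intro j k hjk
    induction k, hjk using Nat.le_induction with
    | base => exact eqOn_refl _ _
    | succ k hjk ih =>
      refine ((heq k _ (hchain k)).mono (Iic_subset_Iic.2 ?_)).trans ih
      gcongr
  refine ⟨fun t => chain ⌈t / τ⌉₊ t, fun k => ⟨chain k, hchain k, fun t ht => ?_⟩⟩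
  have htk : ⌈t / τ⌉₊ ≤ k := Nat.ceil_le.2 ((div_le_iff₀ hτ).2 ht)
  exact (hmono _ k htk ((div_le_iff₀ hτ).1 (Nat.le_ceil _))).symm

variable {n m : ℕ} {f : (Fin n → ℝ) → (Fin m → ℝ) → Fin n → ℝ} {U : Set (Fin m → ℝ)}

lemma isControl_of_forall_eqOn {u : ℝ → Fin m → ℝ} {τ : ℝ} (hτ : 0 < τ)
    (hu : ∀ k : ℕ, ∃ u', IsControl U u' ∧ EqOn u u' (Iic (k * τ))) : IsControl U u := by
  choose u' hu' heq using hu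
  have hlim : ∀ t, ∀ᶠ k : ℕ in atTop, u' k t = u t := fun t =>
    (tendsto_natCast_atTop_atTop.atTop_mul_const hτ |>.eventually_ge_atTop t).mono
      fun k hk => (heq k hk).symm
  refine ⟨measurable_of_tendsto_metrizable (fun k => (hu' k).1)
    (tendsto_pi_nhds.2 fun t => tendsto_const_nhds.congr' (EventuallyEq.symm (hlim t))),
    fun t ht => ?_⟩
  obtain ⟨k, hk⟩ := (hlim t).exists
  exact hk ▸ (hu' k).2 t ht

lemma isTrajectory_of_forall_isTrajectoryOn {u : ℝ → Fin m → ℝ} {ξ : ℝ → Fin n → ℝ} {x : Fin n → ℝ}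
    {τ : ℝ} (hτ : 0 < τ) (h : ∀ k : ℕ, ∃ u' ξ', IsTrajectoryOn f 0 (k * τ) x u' ξ' ∧
      EqOn u u' (Iic (k * τ)) ∧ EqOn ξ ξ' (Iic (k * τ))) : IsTrajectory f x u ξ := by
  have hlt : ∀ t, ∃ k : ℕ, t < k * τ := fun t =>
    (tendsto_natCast_atTop_atTop.atTop_mul_const hτ |>.eventually_gt_atTop t).exists
  have hξ : Continuous ξ := by
    refine continuous_iff_continuousAt.2 fun t => ?_
    obtain ⟨k, hk⟩ := hlt t
    obtain ⟨u', ξ', h', -, heq⟩ := h k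
    exact h'.continuous.continuousAt.congr
      ((heq.eventuallyEq_of_mem (Iic_mem_nhds hk)).symm)
  refine ⟨hξ, fun t ht => ?_⟩
  obtain ⟨k, hk⟩ := hlt t
  obtain ⟨u', ξ', h', hequ, heqξ⟩ := h k
  exact (h'.congr (ht.trans hk.le) hξ (heqξ.mono Icc_subset_Iic_self)
    (hequ.mono Ioc_subset_Iic_self)).eq_add_integral t ⟨ht, hk.le⟩

lemma exists_isTrajectory_of_forall_chunk {Q : ℝ → (Fin n → ℝ) → Prop} {τ : ℝ} (hτ : 0 < τ)
    (hchunk : ∀ a, 0 ≤ a → ∀ z, Q a z → ∃ u ξ, IsControl U u ∧ IsTrajectoryOn f a (a + τ) z u ξ ∧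
      ∀ t ∈ Icc a (a + τ), Q t (ξ t)) {x : Fin n → ℝ} (hx : Q 0 x) :
    ∃ u ξ, IsControl U u ∧ IsTrajectory f x u ξ ∧ ∀ t, 0 ≤ t → Q t (ξ t) := by
  let P (k : ℕ) (w : ℝ → (Fin m → ℝ) × (Fin n → ℝ)) : Prop :=
    IsControl U (fun t => (w t).1) ∧
      IsTrajectoryOn f 0 (k * τ) x (fun t => (w t).1) (fun t => (w t).2) ∧
        ∀ t ∈ Icc 0 (k * τ), Q t (w t).2
  have h₀ : ∃ w, P 0 w := by
    obtain ⟨u, _, hu, -⟩ := hchunk 0 le_rfl x hx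
    refine ⟨fun t => (u t, x), hu, ?_, fun t ht => ?_⟩
    · rw [Nat.cast_zero, zero_mul]
      exact isTrajectoryOn_refl
    · rw [Nat.cast_zero, zero_mul, Icc_self] at ht
      exact ht ▸ hx
  have hstep : ∀ k w, P k w → ∃ w', P (k + 1) w' ∧ EqOn w' w (Iic (k * τ)) := by
    rintro k w ⟨hu, hξ, hQ⟩
    have hkτ : 0 ≤ k * τ := by positivity
    obtain ⟨u', ξ', hu', hξ', hQ'⟩ := hchunk (k * τ) hkτ _ (hQ _ (right_mem_Icc.2 hkτ))
    have hsucc : ((k + 1 : ℕ) : ℝ) * τ = k * τ + τ := by push_cast; ring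
    simp only [P, hsucc]
    refine ⟨fun t => ((Iic (k * τ)).piecewise (fun t => (w t).1) u' t,
      (Iic (k * τ)).piecewise (fun t => (w t).2) ξ' t),
      ⟨hu.piecewise hu' _, hξ.concat hξ' hkτ (by linarith),
        forall_mem_Icc_piecewise hQ hQ'⟩, fun t ht => ?_⟩
    simp only [piecewise_eq_of_mem _ _ _ ht]
  obtain ⟨w, hw⟩ := exists_eqOn_of_forall_extend hτ h₀ hstep
  choose w' hP heq using hw
  refine ⟨fun t => (w t).1, fun t => (w t).2, isControl_of_forall_eqOn hτ fun k => ?_,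
    isTrajectory_of_forall_isTrajectoryOn hτ fun k => ?_, fun t ht => ?_⟩
  · exact ⟨_, (hP k).1, fun t ht => congrArg Prod.fst (heq k ht)⟩
  · exact ⟨_, _, (hP k).2.1, fun t ht => congrArg Prod.fst (heq k ht),
      fun t ht => congrArg Prod.snd (heq k ht)⟩
  · obtain ⟨k, hk⟩ := exists_nat_ge (t / τ)
    have htk : t ≤ k * τ := (div_le_iff₀ hτ).1 hk
    simpa only [heq k htk] using (hP k).2.2 t ⟨ht, htk⟩

end Gluing

section Forward

variable {n m : ℕ} {f : (Fin n → ℝ) → (Fin m → ℝ) → Fin n → ℝ} {U : Set (Fin m → ℝ)}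
  {α : ℝ → ℝ} {β : ℝ → ℝ → ℝ} {h : (Fin n → ℝ) → ℝ} {K : NNReal}

theorem IsViscosityCBF.barrierGuarantee (hV : IsViscosityCBF f U α h) (hU : IsCompact U)
    (hUne : U.Nonempty) (hf : ∀ x, ContinuousOn (f x) U) (hK : ∀ v ∈ U, LipschitzWith K (f · v))
    (hα : LocallyLipschitzOn (Ici 0) α) (hβ : IsBetaFor α β) : BarrierGuarantee f U β h := by
  intro θ hθ x hx
  obtain ⟨hβ₀, hβt⟩ := hβ (θ * h x) (mul_nonneg hθ.1 hx.le)
  obtain ⟨τ, hτ, hτK⟩ := exists_pos_mul_lt (one_half_pos (α := ℝ)) (K : ℝ)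
  have hx₀ : β (θ * h x) 0 < h x := hβ₀.trans_lt (mul_lt_of_lt_one_left hx hθ.2)
  obtain ⟨u, ξ, hu, hξ, hlt⟩ := exists_isTrajectory_of_forall_chunk (f := f) (U := U)
    (Q := fun t z => β (θ * h x) t < h z) hτ
    (fun a ha z hz => hV.exists_isTrajectoryOn_lt hU hUne hf hK hα ha (by linarith) (by linarith)
      (fun t ht => (hβt t (ha.trans ht.1)).2.2.mono fun s hs => ha.trans hs.1)
      (fun t ht => (hβt t (ha.trans ht.1)).1) hz) hx₀
  exact ⟨u, ξ, hu, hξ, fun t ht => (hlt t ht).le⟩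

end Forward

section Converse

lemma integrable_comp_of_continuousOn_of_ae_mem {T Y F : Type*} [MeasurableSpace T] {μ : Measure T}
    [IsFiniteMeasure μ] [TopologicalSpace Y] [MeasurableSpace Y] [BorelSpace Y] [T2Space Y]
    [NormedAddCommGroup F] {S : Set Y} {g : Y → F} {w : T → Y} (hS : IsCompact S)
    (hg : ContinuousOn g S) (hw : Measurable w) (hwS : ∀ᵐ t ∂μ, w t ∈ S) :
    Integrable (g ∘ w) μ := by
  have hint : IntegrableOn g S (μ.map w) := hg.integrableOn_compact hS
  rw [IntegrableOn, Measure.restrict_eq_self_of_ae_mem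
    ((ae_map_iff hw.aemeasurable hS.measurableSet).2 hwS)] at hint
  exact hint.comp_measurable hw

lemma neg_le_of_isLocalMax_sub_of_hasFDerivAt {E : Type*} [NormedAddCommGroup E] [NormedSpace ℝ E]
    {h φ : E → ℝ} {p : E →L[ℝ] ℝ} {x : E} (hφ : HasFDerivAt φ p x)
    (hmax : IsLocalMax (fun z => h z - φ z) x) {z : ℝ → E} {a σ C : ℝ}
    (hz : ∀ᶠ t in 𝓝[>] 0, ‖z t - x‖ ≤ C * t)
    (hhz : ∀ᶠ t in 𝓝[>] 0, h x - t * a - C * t ^ 2 ≤ h (z t))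
    (hpz : ∀ᶠ t in 𝓝[>] 0, p (z t - x) ≤ t * σ + C * t ^ 2) : -a ≤ σ := by
  have hid : Tendsto (fun t : ℝ => t) (𝓝[>] 0) (𝓝 0) :=
    tendsto_nhdsWithin_of_tendsto_nhds tendsto_id
  have hO : (fun t => z t - x) =O[𝓝[>] 0] fun t : ℝ => t := by
    refine .of_bound C ?_
    filter_upwards [hz, self_mem_nhdsWithin] with t ht ht₀
    rwa [Real.norm_of_nonneg (le_of_lt ht₀)]
  have hzx : Tendsto z (𝓝[>] 0) (𝓝 x) :=
    tendsto_sub_nhds_zero_iff.1 (hO.trans_tendsto hid)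
  have ho := ((hφ.isLittleO.comp_tendsto hzx).trans_isBigO hO).tendsto_div_nhds_zero
  have hlim : Tendsto (fun t => σ + 2 * C * t + (φ (z t) - φ x - p (z t - x)) / t) (𝓝[>] 0)
      (𝓝 σ) := by
    simpa using (tendsto_const_nhds.add (hid.const_mul (2 * C))).add ho
  refine ge_of_tendsto hlim ?_
  filter_upwards [hhz, hpz, hzx.eventually hmax, self_mem_nhdsWithin] with t hht hpt hmt ht
  have ht₀ : 0 < t := ht
  rw [← sub_le_iff_le_add', le_div_iff₀ ht₀]
  nlinarith

lemma IsBetaFor.sub_mul_le {α : ℝ → ℝ} {β : ℝ → ℝ → ℝ} (hβ : IsBetaFor α β) {R A : ℝ} {L : NNReal}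
    (hL : LipschitzOnWith L α (Icc 0 R)) (hA : ∀ s ∈ Icc 0 R, |α s| ≤ A) {r : ℝ} (hr : r ∈ Icc 0 R)
    {t : ℝ} (ht : 0 ≤ t) : r - t * (α R + L * (R - r + t * A)) ≤ β r t := by
  obtain ⟨hβ₀, hβt⟩ := hβ r hr.1
  have hmem : ∀ s, 0 ≤ s → β r s ∈ Icc 0 R := fun s hs =>
    ⟨(hβt s hs).1, (hβt s hs).2.1.trans hr.2⟩
  have hdecay : ∀ s, 0 ≤ s → ∀ A', (∀ q ∈ Ioo 0 s, α (β r q) ≤ A') → r - s * A' ≤ β r s := by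
    intro s hs A' hA'
    have := sub_le_mul_sub_of_hasDerivWithinAt_le hs
      (fun q hq => ((hβt q hq.1).2.2.mono Icc_subset_Ici_self).neg) (C := A')
      (by simpa only [neg_neg] using hA')
    simp only [Pi.neg_apply, hβ₀, sub_zero] at this
    linarith
  refine hdecay t ht _ fun s hs => ?_
  have hR : R ∈ Icc 0 R := right_mem_Icc.2 (hr.1.trans hr.2)
  have hA₀ : 0 ≤ A := (abs_nonneg _).trans (hA R hR)
  have hsA : r - s * A ≤ β r s := hdecay s hs.1.le A fun q hq =>
    (le_abs_self _).trans (hA _ (hmem q hq.1.le))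
  calc α (β r s) ≤ α R + L * |β r s - R| :=
        sub_le_iff_le_add'.1 ((le_abs_self _).trans (hL.norm_sub_le (hmem s hs.1.le) hR))
    _ = α R + L * (R - β r s) := by
        rw [abs_sub_comm, abs_of_nonneg (sub_nonneg.2 (hmem s hs.1.le).2)]
    _ ≤ α R + L * (R - r + t * A) := by
        have hst : s * A ≤ t * A := mul_le_mul_of_nonneg_right hs.2.le hA₀
        gcongr
        linarith

-- Replacing `R` by `(1 - t ^ 2) * R` costs only `O(t ^ 2)`, which is invisible to first order.
lemma IsBetaFor.exists_sub_sq_le {α : ℝ → ℝ} {β : ℝ → ℝ → ℝ} (hβ : IsBetaFor α β)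
    (hα : LocallyLipschitzOn (Ici 0) α) {R : ℝ} (hR : 0 ≤ R) :
    ∃ C, ∀ t ∈ Icc 0 1, R - t * α R - C * t ^ 2 ≤ β ((1 - t ^ 2) * R) t := by
  have hα' : LocallyLipschitzOn (Icc 0 R) α := hα.mono Icc_subset_Ici_self
  obtain ⟨L, hL⟩ := hα'.exists_lipschitzOnWith_of_compact isCompact_Icc
  obtain ⟨A, hA⟩ := isCompact_Icc.exists_bound_of_continuousOn hα'.continuousOn
  refine ⟨R + L * (R + A), fun t ht => ?_⟩
  have ht₂ : t ^ 2 ≤ 1 := pow_le_one₀ ht.1 ht.2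
  have hr : (1 - t ^ 2) * R ∈ Icc 0 R :=
    ⟨mul_nonneg (sub_nonneg.2 ht₂) hR, mul_le_of_le_one_left hR (sub_le_self _ (sq_nonneg t))⟩
  have htR : t * R ≤ R := mul_le_of_le_one_left hR ht.2
  calc R - t * α R - (R + L * (R + A)) * t ^ 2
      ≤ R - t * α R - (R + L * (t * R + A)) * t ^ 2 := by gcongr
    _ = (1 - t ^ 2) * R - t * (α R + L * (R - (1 - t ^ 2) * R + t * A)) := by ring
    _ ≤ β ((1 - t ^ 2) * R) t := hβ.sub_mul_le hL hA hr ht.1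

variable {n m : ℕ} {f : (Fin n → ℝ) → (Fin m → ℝ) → Fin n → ℝ} {U : Set (Fin m → ℝ)}
  {α : ℝ → ℝ} {β : ℝ → ℝ → ℝ} {h : (Fin n → ℝ) → ℝ} {K : NNReal}

lemma IsTrajectory.isTrajectoryOn {x : Fin n → ℝ} {u : ℝ → Fin m → ℝ} {ξ : ℝ → Fin n → ℝ}
    (hξ : IsTrajectory f x u ξ) (hu : IsControl U u) (hU : IsCompact U)
    (hf : ContinuousOn (Function.uncurry f) (univ ×ˢ U)) {T : ℝ} (hT : 0 ≤ T) :
    IsTrajectoryOn f 0 T x u ξ := by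
  refine ⟨hξ.1, ?_, fun t ht => hξ.2 t ht.1⟩
  rw [intervalIntegrable_iff_integrableOn_Icc_of_le hT]
  refine integrable_comp_of_continuousOn_of_ae_mem (g := Function.uncurry f)
    (w := fun t => (ξ t, u t)) ((isCompact_Icc (a := 0) (b := T)).image hξ.1 |>.prod hU)
    (hf.mono (prod_mono_left (subset_univ _))) (hξ.1.measurable.prodMk hu.1) ?_
  filter_upwards [ae_restrict_mem measurableSet_Icc] with t ht
  exact ⟨mem_image_of_mem ξ ht, hu.2 t ht.1⟩

lemma BarrierGuarantee.exists_eventually (hB : BarrierGuarantee f U β h) (hU : IsCompact U)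
    (hf : ∀ x, ContinuousOn (f x) U) (hK : ∀ v ∈ U, LipschitzWith K (f · v))
    (hα : LocallyLipschitzOn (Ici 0) α) (hβ : IsBetaFor α β) {x : Fin n → ℝ} (hx : 0 < h x)
    (p : (Fin n → ℝ) →L[ℝ] ℝ) {σ : ℝ} (hσ : ∀ v ∈ U, p (f x v) ≤ σ) :
    ∃ C, ∃ z : ℝ → Fin n → ℝ, ∀ᶠ t in 𝓝[>] 0, ‖z t - x‖ ≤ C * t ∧
      h x - t * α (h x) - C * t ^ 2 ≤ h (z t) ∧ p (z t - x) ≤ t * σ + C * t ^ 2 := by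
  obtain ⟨C, hC⟩ := hU.exists_bound_of_continuousOn (hf x)
  obtain ⟨D, hD⟩ := hβ.exists_sub_sq_le hα hx.le
  have hfU : ContinuousOn (Function.uncurry f) (univ ×ˢ U) :=
    continuousOn_prod_of_continuousOn_lipschitzOnWith (Function.uncurry f) K (fun x _ => hf x)
      fun v hv => (hK v hv).lipschitzOnWith
  obtain ⟨τ, hτ, hτK⟩ := exists_pos_mul_lt (one_half_pos (α := ℝ)) (K : ℝ)
  set M := max (2 * C) (max D (2 * C * K * ‖p‖))
  suffices hz : ∀ᶠ t in 𝓝[>] 0, ∃ z, ‖z - x‖ ≤ M * t ∧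
      h x - t * α (h x) - M * t ^ 2 ≤ h z ∧ p (z - x) ≤ t * σ + M * t ^ 2 from ⟨M, hz.choice⟩
  filter_upwards [Ioo_mem_nhdsGT (lt_min hτ one_pos)] with t ht
  have htτ : t ≤ τ := ht.2.le.trans (min_le_left τ 1)
  have ht₁ : t ≤ 1 := ht.2.le.trans (min_le_right τ 1)
  have htK : (t - 0) * K ≤ 1 / 2 := by
    calc (t - 0) * K ≤ K * τ := by rw [sub_zero, mul_comm]; gcongr
      _ ≤ 1 / 2 := hτK.le
  obtain ⟨u, ξ, hu, hξ, hβξ⟩ := hB (1 - t ^ 2)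
    ⟨sub_nonneg.2 (pow_le_one₀ ht.1.le ht₁), sub_lt_self _ (pow_pos ht.1 2)⟩ x hx
  have huU : ∀ s ∈ Icc 0 t, u s ∈ U := fun s hs => hu.2 s hs.1
  have hξt := hξ.isTrajectoryOn hu hU hfU ht.1.le
  have htmem : t ∈ Icc 0 t := right_mem_Icc.2 ht.1.le
  have hnorm := hξt.norm_sub_le hK huU hC htK t htmem
  have hclm := hξt.clm_sub_le hK huU hC htK p hσ t htmem
  rw [sub_zero] at hnorm hclm
  refine ⟨ξ t, hnorm.trans ?_, ?_, hclm.trans ?_⟩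
  · have := ht.1.le
    gcongr
    exact le_max_left _ _
  · refine le_trans ?_ ((hD t ⟨ht.1.le, ht₁⟩).trans (hβξ t ht.1.le))
    gcongr
    exact (le_max_left _ _).trans (le_max_right _ _)
  · gcongr
    exact (le_max_right _ _).trans (le_max_right _ _)

theorem BarrierGuarantee.isViscosityCBF (hB : BarrierGuarantee f U β h) (hU : IsCompact U)
    (hf : ∀ x, ContinuousOn (f x) U) (hK : ∀ v ∈ U, LipschitzWith K (f · v))
    (hα : LocallyLipschitzOn (Ici 0) α) (hβ : IsBetaFor α β) (hh : Continuous h) :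
    IsViscosityCBF f U α h := by
  refine ⟨hh, fun x hx φ hφ hmax => ?_⟩
  have hbdd : BddAbove ((fun v => fderiv ℝ φ x (f x v)) '' U) :=
    hU.bddAbove_image ((fderiv ℝ φ x).continuous.comp_continuousOn (hf x))
  obtain ⟨C, z, hz⟩ := hB.exists_eventually hU hf hK hα hβ hx (fderiv ℝ φ x)
    fun v hv => le_csSup hbdd (mem_image_of_mem _ hv)
  exact neg_le_of_isLocalMax_sub_of_hasFDerivAt
    (hφ.differentiable one_ne_zero).differentiableAt.hasFDerivAt hmax (hz.mono fun _ ht => ht.1)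
    (hz.mono fun _ ht => ht.2.1) (hz.mono fun _ ht => ht.2.2)

end Converse

theorem isViscosityCBF_iff_barrierGuarantee_general {n m : ℕ}
    {f : (Fin n → ℝ) → (Fin m → ℝ) → Fin n → ℝ} {U : Set (Fin m → ℝ)} (hU : IsCompact U)
    (hUne : U.Nonempty) (hf : ∀ x, ContinuousOn (f x) U) {K : NNReal}
    (hK : ∀ v ∈ U, LipschitzWith K (f · v)) {α : ℝ → ℝ} (hα : LocallyLipschitzOn (Ici 0) α)
    {β : ℝ → ℝ → ℝ} (hβ : IsBetaFor α β) {h : (Fin n → ℝ) → ℝ} (hh : Continuous h) :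
    IsViscosityCBF f U α h ↔ BarrierGuarantee f U β h :=
  ⟨fun hV => hV.barrierGuarantee hU hUne hf hK hα hβ,
    fun hB => hB.isViscosityCBF hU hf hK hα hβ hh⟩

/-- A continuous `h` (not necessarily nonnegative) is a viscosity CBF w.r.t.
`α` iff it provides the Barrier Guarantee w.r.t. `α`. -/
theorem isViscosityCBF_iff_barrierGuarantee {n m : ℕ}
    (f : (Fin n → ℝ) → (Fin m → ℝ) → Fin n → ℝ) (U : Set (Fin m → ℝ))
    (hU : IsCompact U) (hUne : U.Nonempty)
    (hf : ∃ K : NNReal, LipschitzOnWith K (Function.uncurry f) (Set.univ ×ˢ U))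
    (α : ℝ → ℝ) (hα : IsLocallyLipschitzClassK α)
    (β : ℝ → ℝ → ℝ) (hβ : IsBetaFor α β)
    (h : (Fin n → ℝ) → ℝ) (hh : Continuous h) :
    IsViscosityCBF f U α h ↔ BarrierGuarantee f U β h := by
  obtain ⟨K, hK⟩ := hf
  have hstate : ∀ v ∈ U, LipschitzWith K (f · v) := fun v hv => lipschitzOnWith_univ.1 <|
    mul_one K ▸ hK.comp (LipschitzWith.prodMk_right v).lipschitzOnWith fun x hx => ⟨hx, hv⟩
  have hcontrol : ∀ x, ContinuousOn (f x) U := fun x =>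
    hK.continuousOn.comp (Continuous.prodMk_right x).continuousOn fun v hv => ⟨mem_univ x, hv⟩
  exact isViscosityCBF_iff_barrierGuarantee_general hU hUne hcontrol hstate hα.2 hβ hh
end
end
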